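/- μ^ε is a probability measure: Σ_{T∈𝒯} ∫_{ℝ^V×ℝ^V} Π_{j∈V}(e^{−t_j}/(2π)) · Π_{(i∼j)∈E_ρ} e^{−β_ij(B_ij(t,s)−1)} · Π_{(i∼j)∈T} β_ij e^{t_i+t_j} dt ds = 1. -/

import Mathlib

/-!
Summing over trees, integrating out `s`, and recognising the `t`-marginal as the law of a random
Schrödinger operator shows that the total mass is one.

Write `W` for the weights `β` extended by zero to all pairs of vertices. For fixed `t` put
`h_i = Σ_j W_ij e^{t_j - t_i} + ε_i e^{-t_i}` (`fieldOf`), let `H` be the matrix with diagonal `h` and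
off-diagonal entries `-W_ij` (`schr`), and `M = e^t H e^t` (`lapOf`). Then `M` is the Laplacian of the
augmented graph for the weights `β_ij e^{t_i + t_j}` with the row and column of `ρ` removed, so the
matrix-tree theorem (`matrix_tree`) turns the sum over trees into `det M`. The Gibbs factors equal
`exp (-E(t) - ½ s ⬝ M s)`, where `E` (`tEnergy`) depends on `t` only (`prod_gibbs`,
`lapOf_quadForm`), and the Gaussian integral over `s` gives `(2π)^{|V|/2} / √det M`
(`lintegral_gauss_posDef`). What remains to be shown is
`∫ √det H · e^{-E(t)} dt = (2π)^{|V|/2}` (`lintegral_tMarginal`).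

The map `t ↦ h` is a bijection from `ℝ^V` onto `{h : H > 0}`: since `H e^t = ε`, the inverse map is
`e^t = H⁻¹ ε`, which is positive because `H` is inverse-positive and the graph is connected. Its
Jacobian is `det H` up to sign. In the new variables the integrand is
`exp (-½ ε ⬝ H⁻¹ ε - ½ Σ_ij H_ij + Σ_i ε_i) / √det H` (`schrDens`). Its integral is computed by
induction on the number of vertices (`lintegral_schrDens`): integrating out one diagonal entry by
means of the Schur complement leaves the one-dimensional integral
`∫_{y > 0} exp (-a² / (2 * y) - y / 2) / √y dy = √(2π) e^{-a}` (`lintegral_bessel`), and what is left is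
the same density on one vertex fewer, with the weights towards the removed vertex added to `ε`.

The matrix-tree theorem is proved by expanding the determinant along rows into a sum over parent
functions `f : V → V ∪ {ρ}`. The determinant of `1 - P_f` is one if following `f` always leads to
`ρ`, and zero otherwise (`det_laplacian_expand`); the functions of the first kind correspond to
spanning trees oriented towards `ρ`.
-/

open MeasureTheory Real Filter
open scoped BigOperators

attribute [local instance] Classical.propDecidable

namespace H22

variable {V : Type*} [Fintype V] [DecidableEq V]

/-- The augmented graph `Γ_ρ`: add an extra vertex `ρ` (encoded by `none`)
joined to every vertex of the original graph. -/
def aug (G : SimpleGraph V) : SimpleGraph (Option V) :=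
  SimpleGraph.fromRel (fun a b =>
    match a, b with
    | some i, some j => G.Adj i j
    | _, _ => True)

/-- `T` is (the edge set of) a spanning tree of `G`. -/
def IsSpanningTree {α : Type*} (G : SimpleGraph α) (T : Finset (Sym2 α)) : Prop :=
  ↑T ⊆ G.edgeSet ∧ (SimpleGraph.fromEdgeSet (↑T : Set (Sym2 α))).IsTree

/-- The finset of all spanning trees of `G`. -/
noncomputable def STrees {α : Type*} [Fintype α] [DecidableEq α] (G : SimpleGraph α) :
    Finset (Finset (Sym2 α)) :=
  Finset.univ.filter (fun T => IsSpanningTree G T)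

/-- Extension of a vector `t : V → ℝ` to `Option V` by `t_ρ := 0`. -/
def extV (t : V → ℝ) : Option V → ℝ := fun a => Option.elim a 0 t

/-- Lift of a (symmetrized) function of two vertices to unordered pairs. -/
noncomputable def esym {α : Type*} (f : α → α → ℝ) : Sym2 α → ℝ :=
  Sym2.lift ⟨fun a b => (f a b + f b a) / 2, fun a b => by ring⟩

/-- Combined edge weights on the augmented graph: `β` on edges of `Γ`,
`ε_i` on the edge `i ∼ ρ`. -/
def bres (β : V → V → ℝ) (ε : V → ℝ) : Option V → Option V → ℝ := fun a b =>
  match a, b with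
  | some i, some j => β i j
  | some i, none => ε i
  | none, some j => ε j
  | none, none => 0

/-- `B_{ij}(t,s) = cosh(t_i - t_j) + ½ (s_i - s_j)² e^{t_i+t_j}` on the augmented graph. -/
noncomputable def Bfun (t s : V → ℝ) (a b : Option V) : ℝ :=
  Real.cosh (extV t a - extV t b) +
    (1 / 2) * (extV s a - extV s b) ^ 2 * Real.exp (extV t a + extV t b)

/-- Weight `β_{ij} e^{t_i+t_j}` of an edge of the augmented graph. -/
noncomputable def treeW (β : V → V → ℝ) (ε : V → ℝ) (t : V → ℝ) : Sym2 (Option V) → ℝ :=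
  esym (fun a b => bres β ε a b * Real.exp (extV t a + extV t b))

/-- Gibbs factor `e^{-β_{ij}(B_{ij}(t,s)-1)}` of an edge of the augmented graph. -/
noncomputable def gibbs (β : V → V → ℝ) (ε : V → ℝ) (t s : V → ℝ) : Sym2 (Option V) → ℝ :=
  esym (fun a b => Real.exp (-(bres β ε a b * (Bfun t s a b - 1))))

/-- The density of the measure `μ^ε` with respect to
(Lebesgue on `ℝ^V × ℝ^V`) × (counting measure on spanning trees). -/
noncomputable def dens (G : SimpleGraph V) (β : V → V → ℝ) (ε : V → ℝ)
    (t s : V → ℝ) (T : Finset (Sym2 (Option V))) : ℝ :=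
  (∏ j, Real.exp (-t j) / (2 * Real.pi)) *
  (∏ e ∈ Finset.univ.filter (fun e : Sym2 (Option V) => e ∈ (aug G).edgeSet),
      gibbs β ε t s e) *
  (∏ e ∈ T, treeW β ε t e)

/-- Expectation of an observable `f(t,s,T)` under the measure `μ^ε`. -/
noncomputable def expect (G : SimpleGraph V) (β : V → V → ℝ) (ε : V → ℝ)
    (f : (V → ℝ) → (V → ℝ) → Finset (Sym2 (Option V)) → ℝ) : ℝ :=
  ∑ T ∈ STrees (aug G), ∫ p : (V → ℝ) × (V → ℝ), dens G β ε p.1 p.2 T * f p.1 p.2 T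

/-- The weighted graph Laplacian `A(t)` of `Γ`. -/
noncomputable def Amat (G : SimpleGraph V) (β : V → V → ℝ) (t : V → ℝ) : Matrix V V ℝ :=
  Matrix.of fun i j =>
    if i = j then ∑ k ∈ Finset.univ.filter (fun k => G.Adj k j), β k j * Real.exp (t k + t j)
    else if G.Adj i j then -(β i j * Real.exp (t i + t j)) else 0

/-- The pinning diagonal matrix `ε̂(t) = diag(ε_i e^{t_i})`. -/
noncomputable def epsHat (ε : V → ℝ) (t : V → ℝ) : Matrix V V ℝ :=
  Matrix.diagonal fun i => ε i * Real.exp (t i)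

/-- The Green's function `G^ε_{xy} = e^{t_x+t_y} (A(t)+ε̂(t))⁻¹_{xy}`. -/
noncomputable def Gfun (G : SimpleGraph V) (β : V → V → ℝ) (ε : V → ℝ)
    (t : V → ℝ) (x y : V) : ℝ :=
  Real.exp (t x + t y) * (Amat G β t + epsHat ε t)⁻¹ x y

/-- The edge `i ∼ ρ` of the augmented graph. -/
def rootEdge (i : V) : Sym2 (Option V) := s(some i, none)

/-- The set of roots `R(T) = {i ∈ V : (i ∼ ρ) ∈ T}`. -/
noncomputable def roots (T : Finset (Sym2 (Option V))) : Finset V :=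
  Finset.univ.filter fun i => rootEdge i ∈ T

/-- The forest `F(T) = T ∩ E`: edges of `T` not incident to `ρ`. -/
noncomputable def forestOf (T : Finset (Sym2 (Option V))) : Finset (Sym2 (Option V)) :=
  T.filter fun e => ¬ ((none : Option V) ∈ e)

/-- `x ↔_T y`: `x` and `y` are connected in `T` through a path not using `ρ`. -/
def connIn (T : Finset (Sym2 (Option V))) (x y : V) : Prop :=
  (SimpleGraph.fromEdgeSet (↑(forestOf T) : Set (Sym2 (Option V)))).Reachable (some x) (some y)

/-- The observable `O^π_{xy}`. -/
noncomputable def obs (pv : V → ℝ) (x y : V) (t : V → ℝ)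
    (T : Finset (Sym2 (Option V))) : ℝ :=
  Real.exp (t x + t y) / (pv x * Real.exp (t x) + pv y * Real.exp (t y)) *
    (if rootEdge x ∈ T ∧ connIn T x y then 1 else 0)

/-- The pinning `ε = (π_i ε)_{i ∈ V}`. -/
def pinOf (pv : V → ℝ) (ε : ℝ) : V → ℝ := fun i => pv i * ε

/-- The pinning `c δ_x` concentrated at the single vertex `x`. -/
def singlePin (x : V) (c : ℝ) : V → ℝ := fun i => if i = x then c else 0

end H22

/-! ### The matrix-tree theorem -/

namespace H22

section MatrixTree

/-- A parent function `f : V → Option V` is well founded: following parents always ends at the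
root `none`.  This is encoded by a height function that strictly decreases along `f`. -/
def HasDepth {V : Type*} (f : V → Option V) : Prop :=
  ∃ d : Option V → ℕ, ∀ i, d (f i) < d (some i)

/-- The matrix `1 - P_f`, where `P_f` is the 0-1 matrix of a parent function `f`. -/
def parentMat {V : Type*} [DecidableEq V] (f : V → Option V) : Matrix V V ℝ :=
  Matrix.of fun i j => (if i = j then 1 else 0) - (if f i = some j then 1 else 0)

/-- Ordering the vertices by depth makes `1 - P_f` unitriangular. -/
lemma det_parentMat_of_hasDepth {V : Type*} [Fintype V] [DecidableEq V] {f : V → Option V}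
    (hf : HasDepth f) : (parentMat f).det = 1 := by
  obtain ⟨d, hd⟩ := hf
  have hbt : (parentMat f).BlockTriangular (fun i => OrderDual.toDual (d (some i))) := by
    intro i j hij
    have hij' : d (some i) < d (some j) := hij
    have h1 : i ≠ j := by rintro rfl; exact lt_irrefl _ hij'
    have h2 : f i ≠ some j := by
      intro h
      have := hd i
      rw [h] at this
      omega
    simp [parentMat, h1, h2]
  rw [hbt.det]
  refine Finset.prod_eq_one fun a _ => ?_
  rw [← Matrix.det_one (n := { i // OrderDual.toDual (d (some i)) = a }) (R := ℝ)]
  congr 1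
  ext ⟨i, hi⟩ ⟨j, hj⟩
  have h2 : f i ≠ some j := by
    intro h
    have h3 := hd i
    rw [h] at h3
    have h4 : d (some i) = d (some j) := OrderDual.toDual_inj.1 (hi.trans hj.symm)
    omega
  simp [Matrix.toSquareBlock_def, parentMat, h2, Matrix.one_apply]

/-- If some vertex never reaches the root, the indicator of all such vertices is in the kernel of
`1 - P_f`. -/
lemma det_parentMat_of_not_hasDepth {V : Type*} [Fintype V] [DecidableEq V] {f : V → Option V}
    (hf : ¬ HasDepth f) : (parentMat f).det = 0 := by
  classical
  set F : Option V → Option V := fun a => a.bind f with hF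
  have hex : ∃ a, ∀ n, F^[n] a ≠ none := by
    by_contra! h
    refine hf ⟨fun a => Nat.find (h a), fun i => ?_⟩
    have hs := Nat.find_spec (h (some i))
    have hpos : Nat.find (h (some i)) ≠ 0 := by
      intro h0
      rw [h0] at hs
      simp at hs
    obtain ⟨m, hm⟩ := Nat.exists_eq_succ_of_ne_zero hpos
    rw [hm, Function.iterate_succ_apply] at hs
    have : Nat.find (h (f i)) ≤ m := Nat.find_min' _ hs
    change Nat.find (h (f i)) < Nat.find (h (some i))
    omega
  obtain ⟨a, ha⟩ := hex
  obtain ⟨i₀, rfl⟩ : ∃ i, a = some i := by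
    cases a with
    | none => exact absurd rfl (ha 0)
    | some i => exact ⟨i, rfl⟩
  refine Matrix.exists_mulVec_eq_zero_iff.1
    ⟨fun i => if ∀ n, F^[n] (some i) ≠ none then 1 else 0, ?_, ?_⟩
  · intro h
    have := congrFun h i₀
    simp [ha] at this
  · ext i
    have key : (∀ n, F^[n] (some i) ≠ none) ↔ (∀ n, F^[n] (f i) ≠ none) := by
      constructor
      · intro h n
        exact h (n + 1)
      · intro h n
        cases n with
        | zero => simp
        | succ n => exact h n
    simp only [Matrix.mulVec, dotProduct, parentMat, Matrix.of_apply, sub_mul, Finset.sum_sub_distrib,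
      ite_mul, one_mul, zero_mul, Finset.sum_ite_eq, Finset.mem_univ, if_true, Pi.zero_apply]
    simp only [key]
    cases hfi : f i with
    | none =>
      have : ¬ ∀ n, F^[n] none ≠ none := fun h => h 0 rfl
      simp [this]
    | some j => simp

/-- Expansion of the determinant of a (possibly non-symmetric) pinned Laplacian, row by row. -/
lemma det_laplacian_expand {V : Type*} [Fintype V] [DecidableEq V] (c : V → Option V → ℝ) :
    (Matrix.of fun i j : V => (if i = j then ∑ a, c i a else 0) - c i (some j)).det =
      ∑ f : V → Option V, (∏ i, c i (f i)) * (parentMat f).det := by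
  have h1 : (Matrix.of fun i j : V => (if i = j then ∑ a, c i a else 0) - c i (some j)) =
      fun i => ∑ a : Option V, c i a •
        (fun j => (if i = j then (1 : ℝ) else 0) - (if a = some j then 1 else 0)) := by
    ext i j
    simp [Finset.sum_apply, mul_sub, Finset.sum_sub_distrib]
  rw [h1]
  change (Matrix.detRowAlternating (n := V) (R := ℝ)).toMultilinearMap _ = _
  rw [MultilinearMap.map_sum]
  refine Finset.sum_congr rfl fun f _ => ?_
  rw [MultilinearMap.map_smul_univ]
  rfl

/-- The edge set `{i ∼ f(i)}` of a parent function. -/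
noncomputable def parentEdges {V : Type*} [Fintype V] [DecidableEq V] (f : V → Option V) :
    Finset (Sym2 (Option V)) :=
  Finset.univ.image fun i => s(some i, f i)

/-- A well-founded parent function gives a connected graph with at most `|V|` edges on `|V| + 1`
vertices, hence a tree with exactly `|V|` edges. -/
lemma HasDepth.isTree {V : Type*} [Fintype V] [DecidableEq V] {f : V → Option V}
    (hf : HasDepth f) :
    (SimpleGraph.fromEdgeSet (↑(parentEdges f) : Set (Sym2 (Option V)))).IsTree ∧
      (parentEdges f).card = Fintype.card V := by
  obtain ⟨d, hd⟩ := hf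
  set K := SimpleGraph.fromEdgeSet (↑(parentEdges f) : Set (Sym2 (Option V))) with hK
  have hadj : ∀ i, K.Adj (some i) (f i) := by
    intro i
    rw [hK, SimpleGraph.fromEdgeSet_adj]
    refine ⟨Finset.mem_image_of_mem _ (Finset.mem_univ i), fun h => ?_⟩
    have := hd i
    rw [← h] at this
    exact lt_irrefl _ this
  have hreach : ∀ n, ∀ a, d a = n → K.Reachable a none := by
    intro n
    induction n using Nat.strong_induction_on with
    | _ n ih =>
      intro a ha
      cases a with
      | none => exact SimpleGraph.Reachable.refl _
      | some i =>
        have := hd i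
        exact (hadj i).reachable.trans (ih _ (ha ▸ this) _ rfl)
  have hconn : K.Connected := by
    rw [SimpleGraph.connected_iff_exists_forall_reachable]
    exact ⟨none, fun a => (hreach _ a rfl).symm⟩
  have hsub : K.edgeSet ⊆ ↑(parentEdges f) := by
    rw [hK, SimpleGraph.edgeSet_fromEdgeSet]
    exact Set.sdiff_subset
  have h1 := hconn.card_vert_le_card_edgeSet_add_one
  have h2 : Nat.card K.edgeSet ≤ (parentEdges f).card := by
    have := Nat.card_mono (Finset.finite_toSet _) hsub
    simpa using this
  have h3 : (parentEdges f).card ≤ Fintype.card V := Finset.card_image_le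
  have h4 : Nat.card (Option V) = Fintype.card V + 1 := by simp
  refine ⟨SimpleGraph.isTree_iff_connected_and_card.2 ⟨hconn, by omega⟩, by omega⟩

/-- A well-founded parent function is determined by its edge set, by induction on the depth. -/
lemma parentEdges_inj {V : Type*} [Fintype V] [DecidableEq V] {f g : V → Option V}
    (hf : HasDepth f) (h : parentEdges f = parentEdges g) : f = g := by
  obtain ⟨d, hd⟩ := hf
  have hmem : ∀ i, ∃ j, s(some j, g j) = s(some i, f i) := by
    intro i
    have : s(some i, f i) ∈ parentEdges g := by rw [← h]; exact Finset.mem_image_of_mem _ (Finset.mem_univ i)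
    simpa only [parentEdges, Finset.mem_image, Finset.mem_univ, true_and] using this
  have key : ∀ n, ∀ i, d (some i) = n → f i = g i := by
    intro n
    induction n using Nat.strong_induction_on with
    | _ n ih =>
      intro i hi
      obtain ⟨j, hj⟩ := hmem i
      rcases Sym2.eq_iff.1 hj with ⟨h1, h2⟩ | ⟨h1, h2⟩
      · rw [Option.some_inj.1 h1] at h2
        exact h2.symm
      -- Here `f i = j` and `g j = i`; since `j` is lower, `f j = g j = i`, contradicting the depth.
      · have h3 := hd i
        have h4 := hd j
        rw [← h1] at h3
        rw [ih _ (hi ▸ h3) j rfl, h2] at h4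
        omega
  exact funext fun i => key _ i rfl

/-- In a tree, sending each vertex to a neighbour closer to the root is a well-founded parent
function. -/
lemma exists_parent_of_isTree {V : Type*} [Fintype V] [DecidableEq V]
    {T : Finset (Sym2 (Option V))}
    (hT : (SimpleGraph.fromEdgeSet (↑T : Set (Sym2 (Option V)))).IsTree) :
    ∃ f : V → Option V, HasDepth f ∧
      ∀ i, (SimpleGraph.fromEdgeSet (↑T : Set (Sym2 (Option V)))).Adj (some i) (f i) := by
  set K := SimpleGraph.fromEdgeSet (↑T : Set (Sym2 (Option V))) with hK
  have hstep : ∀ i : V, ∃ a, K.Adj (some i) a ∧ K.dist a none < K.dist (some i) none := by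
    intro i
    obtain ⟨p, hp⟩ := (hT.connected (some i) none).exists_walk_length_eq_dist
    cases p with
    | cons hadj q =>
      refine ⟨_, hadj, ?_⟩
      have := SimpleGraph.dist_le q
      simp at hp
      omega
  choose f hf hd using hstep
  exact ⟨f, ⟨fun a => K.dist a none, hd⟩, hf⟩

lemma mem_STrees {α : Type*} [Fintype α] [DecidableEq α] {K : SimpleGraph α}
    {T : Finset (Sym2 α)} : T ∈ STrees K ↔ IsSpanningTree K T := by
  simp [STrees]

/-- The weighted **matrix-tree theorem**: the determinant of the Laplacian of a weighted graph `K`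
on `Option V`, with the row and column of `none` removed, is the sum over spanning trees of the
products of edge weights. -/
lemma matrix_tree {V : Type*} [Fintype V] [DecidableEq V] (K : SimpleGraph (Option V))
    (F : Sym2 (Option V) → ℝ) :
    (Matrix.of fun i j : V =>
      (if i = j then ∑ a, (if K.Adj (some i) a then F s(some i, a) else 0) else 0) -
        (if K.Adj (some i) (some j) then F s(some i, some j) else 0)).det =
      ∑ T ∈ STrees K, ∏ e ∈ T, F e := by
  rw [det_laplacian_expand (fun i a => if K.Adj (some i) a then F s(some i, a) else 0)]
  have h1 : ∀ f : V → Option V,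
      (∏ i, (if K.Adj (some i) (f i) then F s(some i, f i) else 0)) * (parentMat f).det =
      if HasDepth f ∧ ∀ i, K.Adj (some i) (f i) then ∏ i, F s(some i, f i) else 0 := by
    intro f
    by_cases hf : HasDepth f
    · rw [det_parentMat_of_hasDepth hf, mul_one]
      by_cases hadj : ∀ i, K.Adj (some i) (f i)
      · simp [hf, hadj]
      · rw [if_neg (fun h => hadj h.2)]
        push Not at hadj
        obtain ⟨i, hi⟩ := hadj
        exact Finset.prod_eq_zero (Finset.mem_univ i) (if_neg hi)
    · simp [hf, det_parentMat_of_not_hasDepth hf]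
  simp_rw [h1]
  rw [← Finset.sum_filter]
  refine Finset.sum_bij (fun f _ => parentEdges f) ?_ ?_ ?_ ?_
  · intro f hf
    rw [Finset.mem_filter] at hf
    rw [mem_STrees]
    refine ⟨?_, hf.2.1.isTree.1⟩
    intro e he
    simp only [parentEdges, Finset.coe_image, Set.mem_image] at he
    obtain ⟨i, -, rfl⟩ := he
    exact hf.2.2 i
  · intro f hf g _ h
    exact parentEdges_inj (Finset.mem_filter.1 hf).2.1 h
  · intro T hT
    rw [mem_STrees] at hT
    obtain ⟨hTK, hT⟩ := hT
    obtain ⟨f, hf, hadj⟩ := exists_parent_of_isTree hT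
    have hmem : ∀ i, s(some i, f i) ∈ T := fun i => by
      have := (SimpleGraph.fromEdgeSet_adj _).1 (hadj i)
      exact this.1
    refine ⟨f, Finset.mem_filter.2 ⟨Finset.mem_univ _, hf, fun i => hTK (hmem i)⟩, ?_⟩
    have hsub : parentEdges f ⊆ T := by
      intro e he
      simp only [parentEdges, Finset.mem_image] at he
      obtain ⟨i, -, rfl⟩ := he
      exact hmem i
    refine Finset.eq_of_subset_of_card_le hsub ?_
    rw [hf.isTree.2]
    have h2 := (SimpleGraph.isTree_iff_connected_and_card.1 hT).2
    have h3 : (SimpleGraph.fromEdgeSet (↑T : Set (Sym2 (Option V)))).edgeSet = ↑T := by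
      rw [SimpleGraph.edgeSet_fromEdgeSet, sdiff_eq_left]
      rw [Set.disjoint_left]
      intro e he hd
      exact K.not_isDiag_of_mem_edgeSet (hTK he) hd
    rw [h3] at h2
    simp at h2
    omega
  · intro f hf
    have hf := (Finset.mem_filter.1 hf).2.1
    rw [parentEdges, Finset.prod_image]
    refine Finset.card_image_iff.1 ?_
    have := hf.isTree.2
    rw [parentEdges] at this
    rw [this]; rfl

end MatrixTree

end H22

/-! ### The one-dimensional integral -/

namespace H22

open scoped ENNReal

section Bessel

lemma lintegral_gauss : ∫⁻ v : ℝ, ENNReal.ofReal (Real.exp (-(1 / 2) * v ^ 2)) =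
    ENNReal.ofReal (√(2 * π)) := by
  rw [← ofReal_integral_eq_lintegral_ofReal (integrable_exp_neg_mul_sq (by norm_num))
    (ae_of_all _ fun _ => (Real.exp_pos _).le), integral_gaussian]
  congr 2
  field_simp

/-- The substitution `v = 2√a sinh(τ/2)` turns the integral into a Gaussian one. -/
lemma lintegral_cosh {a : ℝ} (ha : 0 < a) :
    ∫⁻ τ : ℝ, ENNReal.ofReal (√a * Real.cosh (τ / 2) * Real.exp (-a * Real.cosh τ)) =
      ENNReal.ofReal (√(2 * π) * Real.exp (-a)) := by
  have hsa : 0 < √a := Real.sqrt_pos.2 ha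
  have hder : ∀ τ ∈ (Set.univ : Set ℝ), HasDerivWithinAt (fun τ => 2 * √a * Real.sinh (τ / 2))
      (√a * Real.cosh (τ / 2)) Set.univ τ := by
    intro τ _
    have h := ((hasDerivAt_id τ).div_const 2).sinh.const_mul (2 * √a)
    refine (h.congr_deriv ?_).hasDerivWithinAt
    simp; ring
  have hinj : Set.InjOn (fun τ => 2 * √a * Real.sinh (τ / 2)) Set.univ := by
    intro x _ y _ h
    have h' := mul_left_cancel₀ (by positivity) h
    have := Real.sinh_injective h'
    linarith
  have himg : (fun τ => 2 * √a * Real.sinh (τ / 2)) '' Set.univ = Set.univ := by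
    rw [Set.image_univ, Set.range_eq_univ]
    intro y
    obtain ⟨x, hx⟩ := Real.sinh_surjective (y / (2 * √a))
    refine ⟨2 * x, ?_⟩
    simp only [mul_div_cancel_left₀ x (two_ne_zero (α := ℝ)), hx]
    field_simp
  have h := lintegral_image_eq_lintegral_abs_deriv_mul MeasurableSet.univ hder hinj
    (fun v => ENNReal.ofReal (Real.exp (-a) * Real.exp (-(1 / 2) * v ^ 2)))
  rw [himg, Measure.restrict_univ] at h
  have h2 : ∀ τ : ℝ, ENNReal.ofReal |√a * Real.cosh (τ / 2)| *
      ENNReal.ofReal (Real.exp (-a) * Real.exp (-(1 / 2) * (2 * √a * Real.sinh (τ / 2)) ^ 2)) =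
      ENNReal.ofReal (√a * Real.cosh (τ / 2) * Real.exp (-a * Real.cosh τ)) := by
    intro τ
    rw [abs_of_pos (mul_pos hsa (Real.cosh_pos _)),
      ← ENNReal.ofReal_mul (mul_pos hsa (Real.cosh_pos _)).le, ← Real.exp_add]
    congr 3
    have h3 : Real.cosh τ = 1 + 2 * Real.sinh (τ / 2) ^ 2 := by
      have := Real.cosh_two_mul (τ / 2)
      rw [mul_div_cancel₀ τ (two_ne_zero (α := ℝ)), Real.cosh_sq] at this
      linarith
    rw [h3, mul_pow, mul_pow, Real.sq_sqrt ha.le]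
    ring
  simp_rw [h2] at h
  rw [← h]
  simp_rw [ENNReal.ofReal_mul (Real.exp_pos (-a)).le]
  rw [lintegral_const_mul' _ _ ENNReal.ofReal_ne_top, lintegral_gauss,
    ← ENNReal.ofReal_mul (Real.exp_pos _).le, mul_comm]

/-- Integration of the Schur complement variable.  For `a > 0`, put `y = a e^τ`, symmetrise in `τ`
and use `lintegral_cosh`. -/
lemma lintegral_bessel {a : ℝ} (ha : 0 ≤ a) :
    ∫⁻ y in Set.Ioi (0 : ℝ), ENNReal.ofReal
      (Real.exp (-(1 / 2) * (a ^ 2 / y) - 1 / 2 * y) / √y) =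
      ENNReal.ofReal (√(2 * π) * Real.exp (-a)) := by
  rcases ha.eq_or_lt with rfl | ha
  · have h1 : ∀ y ∈ Set.Ioi (0 : ℝ),
        Real.exp (-(1 / 2) * ((0 : ℝ) ^ 2 / y) - 1 / 2 * y) / √y =
          y ^ ((1 / 2 : ℝ) - 1) * Real.exp (-((1 / 2) * y)) := by
      intro y hy
      have hy : 0 < y := hy
      rw [show ((1 / 2 : ℝ) - 1) = -(1 / 2) by norm_num, Real.rpow_neg hy.le, ← Real.sqrt_eq_rpow]
      simp
      ring
    have h2 : ∫ y in Set.Ioi (0 : ℝ), y ^ ((1 / 2 : ℝ) - 1) * Real.exp (-((1 / 2) * y)) =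
        √(2 * π) := by
      rw [Real.integral_rpow_mul_exp_neg_mul_Ioi (by norm_num) (by norm_num),
        Real.Gamma_one_half_eq, ← Real.sqrt_eq_rpow, ← Real.sqrt_mul (by norm_num)]
      norm_num
    rw [setLIntegral_congr_fun measurableSet_Ioi (fun y hy => by rw [h1 y hy]),
      ← ofReal_integral_eq_lintegral_ofReal, h2]
    · simp
    · refine Integrable.of_integral_ne_zero ?_
      rw [h2]
      positivity
    · refine (ae_restrict_iff' measurableSet_Ioi).2 (ae_of_all _ fun y hy => ?_)
      have hy : 0 < y := hy
      positivity
  · have hsa : 0 < √a := Real.sqrt_pos.2 ha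
    have hder : ∀ τ ∈ (Set.univ : Set ℝ), HasDerivWithinAt (fun τ => a * Real.exp τ)
        (a * Real.exp τ) Set.univ τ := fun τ _ =>
      ((Real.hasDerivAt_exp τ).const_mul a).hasDerivWithinAt
    have hinj : Set.InjOn (fun τ => a * Real.exp τ) Set.univ := by
      intro x _ y _ h
      exact Real.exp_injective (mul_left_cancel₀ ha.ne' h)
    have himg : (fun τ => a * Real.exp τ) '' Set.univ = Set.Ioi 0 := by
      ext y
      simp only [Set.image_univ, Set.mem_range, Set.mem_Ioi]
      constructor
      · rintro ⟨τ, rfl⟩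
        positivity
      · intro hy
        refine ⟨Real.log (y / a), ?_⟩
        rw [Real.exp_log (by positivity)]
        field_simp
    rw [← himg, lintegral_image_eq_lintegral_abs_deriv_mul MeasurableSet.univ hder hinj,
      Measure.restrict_univ]
    have h2 : ∀ τ : ℝ, ENNReal.ofReal |a * Real.exp τ| * ENNReal.ofReal
        (Real.exp (-(1 / 2) * (a ^ 2 / (a * Real.exp τ)) - 1 / 2 * (a * Real.exp τ)) /
          √(a * Real.exp τ)) =
        ENNReal.ofReal (√a * Real.exp (τ / 2) * Real.exp (-a * Real.cosh τ)) := by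
      intro τ
      rw [abs_of_pos (by positivity), ← ENNReal.ofReal_mul (by positivity)]
      congr 1
      have e1 : -(1 / 2) * (a ^ 2 / (a * Real.exp τ)) - 1 / 2 * (a * Real.exp τ) =
          -a * Real.cosh τ := by
        rw [Real.cosh_eq, Real.exp_neg]
        have := Real.exp_pos τ
        field_simp
        ring
      have e2 : √(a * Real.exp τ) = √a * Real.exp (τ / 2) := by
        rw [Real.sqrt_mul ha.le, Real.exp_half]
      have e3 : Real.exp τ = Real.exp (τ / 2) * Real.exp (τ / 2) := by
        rw [← Real.exp_add]; ring_nf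
      have e4 := Real.exp_pos (τ / 2)
      rw [e1, e2, e3]
      nth_rewrite 1 [← Real.mul_self_sqrt ha.le]
      field_simp
    simp_rw [h2]
    have h3 : ∫⁻ τ : ℝ, ENNReal.ofReal (√a * Real.exp (τ / 2) * Real.exp (-a * Real.cosh τ)) =
        ∫⁻ τ : ℝ, ENNReal.ofReal (√a * Real.exp (-τ / 2) * Real.exp (-a * Real.cosh τ)) := by
      rw [← lintegral_neg_eq_self]
      simp [Real.cosh_neg]
    have h4 : (∫⁻ τ : ℝ, ENNReal.ofReal (√a * Real.exp (τ / 2) * Real.exp (-a * Real.cosh τ))) +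
        ∫⁻ τ : ℝ, ENNReal.ofReal (√a * Real.exp (-τ / 2) * Real.exp (-a * Real.cosh τ)) =
        2 * ENNReal.ofReal (√(2 * π) * Real.exp (-a)) := by
      rw [← lintegral_add_left (by fun_prop), ← lintegral_cosh ha, ← lintegral_const_mul' _ _ (by simp)]
      refine lintegral_congr fun τ => ?_
      rw [← ENNReal.ofReal_add (by positivity) (by positivity),
        show (2 : ℝ≥0∞) = ENNReal.ofReal 2 by simp, ← ENNReal.ofReal_mul (by norm_num)]
      congr 1
      rw [Real.cosh_eq (τ / 2), neg_div]
      ring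
    rw [← h3, ← two_mul] at h4
    exact (ENNReal.mul_right_inj (by simp) (by simp)).1 h4

end Bessel

end H22

/-! ### Gaussian integrals -/

namespace H22

section Gaussian

open Matrix in
/-- Gaussian integral of a positive definite quadratic form. -/
lemma lintegral_gauss_posDef {n : Type*} [Fintype n] [DecidableEq n] {M : Matrix n n ℝ}
    (hM : M.PosDef) :
    ∫⁻ s : n → ℝ, ENNReal.ofReal (Real.exp (-(1 / 2) * (s ⬝ᵥ (M *ᵥ s)))) =
      ENNReal.ofReal (√(2 * π) ^ Fintype.card n / √M.det) := by
  obtain ⟨B, hB⟩ : ∃ B : Matrix n n ℝ, M = Bᴴ * B := by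
    open scoped MatrixOrder in
    exact CStarAlgebra.nonneg_iff_eq_star_mul_self.mp hM.posSemidef.nonneg
  have hdet : M.det = B.det ^ 2 := by
    rw [hB, Matrix.det_mul, Matrix.det_conjTranspose]
    simp [sq]
  have hB0 : B.det ≠ 0 := by
    intro h
    have := hM.det_pos
    rw [hdet, h] at this
    simp at this
  have hsq : ∀ s : n → ℝ, s ⬝ᵥ (M *ᵥ s) = ∑ i, (B *ᵥ s) i ^ 2 := by
    intro s
    rw [hB, ← Matrix.mulVec_mulVec, Matrix.dotProduct_mulVec, ← Matrix.mulVec_transpose]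
    simp [Matrix.conjTranspose_eq_transpose_of_trivial, dotProduct, sq]
  have hstd : ∫⁻ v : n → ℝ, ENNReal.ofReal (Real.exp (-(1 / 2) * ∑ i, v i ^ 2)) =
      ENNReal.ofReal (√(2 * π) ^ Fintype.card n) := by
    have h1 : ∀ v : n → ℝ, Real.exp (-(1 / 2) * ∑ i, v i ^ 2) =
        ∏ i, Real.exp (-(1 / 2) * v i ^ 2) := by
      intro v
      rw [Finset.mul_sum, Real.exp_sum]
    have hI : ∫ v : n → ℝ, ∏ i, Real.exp (-(1 / 2) * v i ^ 2) = √(2 * π) ^ Fintype.card n := by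
      rw [integral_fintype_prod_volume_eq_pow (fun x : ℝ => Real.exp (-(1 / 2) * x ^ 2)),
        integral_gaussian]
      congr 2
      field_simp
    simp_rw [h1]
    rw [← ofReal_integral_eq_lintegral_ofReal, hI]
    · refine Integrable.of_integral_ne_zero ?_
      rw [hI]
      positivity
    · exact ae_of_all _ fun _ => Finset.prod_nonneg fun _ _ => (Real.exp_pos _).le
  have hmap := Real.map_matrix_volume_pi_eq_smul_volume_pi hB0
  have hmeas : Measurable (Matrix.toLin' B) :=
    (LinearMap.continuous_of_finiteDimensional _).measurable
  calc ∫⁻ s : n → ℝ, ENNReal.ofReal (Real.exp (-(1 / 2) * (s ⬝ᵥ (M *ᵥ s))))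
      = ∫⁻ s : n → ℝ, (fun v : n → ℝ =>
          ENNReal.ofReal (Real.exp (-(1 / 2) * ∑ i, v i ^ 2))) (Matrix.toLin' B s) := by
        simp_rw [hsq, Matrix.toLin'_apply]
    _ = ENNReal.ofReal |(B.det)⁻¹| * ENNReal.ofReal (√(2 * π) ^ Fintype.card n) := by
        have hg : Measurable fun v : n → ℝ =>
            ENNReal.ofReal (Real.exp (-(1 / 2) * ∑ i, v i ^ 2)) := by fun_prop
        have h2 := lintegral_map (μ := volume) hg hmeas
        rw [← h2, hmap, lintegral_smul_measure, hstd, smul_eq_mul]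
    _ = _ := by
        rw [← ENNReal.ofReal_mul (abs_nonneg _), hdet, Real.sqrt_sq_eq_abs, abs_inv]
        congr 1
        ring

end Gaussian

end H22

/-! ### Random Schrödinger operators -/

set_option linter.unusedSectionVars false

namespace H22

open scoped ENNReal Matrix

section Schroedinger

variable {n : Type*} [Fintype n] [DecidableEq n]

/-- The random Schrödinger operator: diagonal `h` (the random field), off-diagonal entries `-W`. -/
def schr (W : n → n → ℝ) (h : n → ℝ) : Matrix n n ℝ :=
  Matrix.of fun i j => if i = j then h i else -W i j

/-- Unnormalised density of the field `h`; it is supported on `{schr W h > 0}`. -/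
noncomputable def schrDens (W : n → n → ℝ) (η h : n → ℝ) : ℝ≥0∞ :=
  if (schr W h).PosDef then ENNReal.ofReal
    (Real.exp (-(1 / 2) * (η ⬝ᵥ ((schr W h)⁻¹ *ᵥ η)) - 1 / 2 * (∑ i, ∑ j, schr W h i j) + ∑ i, η i)
      / √(schr W h).det)
  else 0

lemma schr_isHermitian {W : n → n → ℝ} (hW : ∀ i j, W i j = W j i) (h : n → ℝ) :
    (schr W h).IsHermitian := by
  ext i j
  simp only [Matrix.conjTranspose_apply, schr, Matrix.of_apply, star_trivial]
  by_cases hij : i = j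
  · subst hij; rfl
  · rw [if_neg hij, if_neg (Ne.symm hij), hW]

lemma continuous_schr (W : n → n → ℝ) : Continuous fun h => schr W h := by
  refine continuous_matrix fun i j => ?_
  simp only [schr, Matrix.of_apply]
  split_ifs <;> fun_prop

/-- Positive definite means positive semidefinite, a closed condition, with nonzero determinant, an
open condition. -/
lemma measurableSet_posDef {W : n → n → ℝ} (hW : ∀ i j, W i j = W j i) :
    MeasurableSet {h : n → ℝ | (schr W h).PosDef} := by
  have h1 : {h : n → ℝ | (schr W h).PosDef} =
      (⋂ x : n → ℝ, {h | 0 ≤ x ⬝ᵥ (schr W h *ᵥ x)}) ∩ {h | (schr W h).det ≠ 0} := by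
    ext h
    simp only [Set.mem_ofPred_eq, Set.mem_inter_iff, Set.mem_iInter]
    constructor
    · intro hp
      exact ⟨fun x => by simpa using hp.posSemidef.dotProduct_mulVec_nonneg x, hp.det_pos.ne'⟩
    · rintro ⟨hp, hd⟩
      exact (Matrix.PosSemidef.of_dotProduct_mulVec_nonneg (schr_isHermitian hW h)
        (by simpa using hp)).posDef_iff_det_ne_zero.2 hd
  rw [h1]
  have hc := continuous_schr W
  refine MeasurableSet.inter (IsClosed.measurableSet ?_) (IsOpen.measurableSet ?_)
  · exact isClosed_iInter fun x => isClosed_le continuous_const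
      (continuous_const.dotProduct (hc.matrix_mulVec continuous_const))
  · exact isOpen_ne_fun hc.matrix_det continuous_const

lemma measurable_schrDens {W : n → n → ℝ} (hW : ∀ i j, W i j = W j i) (η : n → ℝ) :
    Measurable (schrDens W η) := by
  have hc := continuous_schr W
  have hinv : ∀ i j, Measurable fun h => (schr W h)⁻¹ i j := by
    intro i j
    simp only [Matrix.inv_def, Ring.inverse_eq_inv', Matrix.smul_apply, smul_eq_mul]
    exact hc.matrix_det.measurable.inv.mul (hc.matrix_adjugate.matrix_elem i j).measurable
  have hent : ∀ i j, Measurable fun h => schr W h i j := fun i j =>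
    (hc.matrix_elem i j).measurable
  have hquad : Measurable fun h => η ⬝ᵥ ((schr W h)⁻¹ *ᵥ η) := by
    simp only [dotProduct, Matrix.mulVec]
    exact Finset.measurable_sum _ fun i _ => measurable_const.mul
      (Finset.measurable_sum _ fun j _ => (hinv i j).mul measurable_const)
  have hsum : Measurable fun h => ∑ i, ∑ j, schr W h i j :=
    Finset.measurable_sum _ fun i _ => Finset.measurable_sum _ fun j _ => hent i j
  have hdens : Measurable fun h => ENNReal.ofReal
      (Real.exp (-(1 / 2) * (η ⬝ᵥ ((schr W h)⁻¹ *ᵥ η)) - 1 / 2 * (∑ i, ∑ j, schr W h i j) +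
        ∑ i, η i) / √(schr W h).det) :=
    ENNReal.measurable_ofReal.comp (Measurable.div
      (Real.measurable_exp.comp (((measurable_const.mul hquad).sub
        (measurable_const.mul hsum)).add measurable_const)) hc.matrix_det.measurable.sqrt)
  unfold schrDens
  exact Measurable.ite (measurableSet_posDef hW) hdens measurable_const

/-- A positive definite matrix with nonpositive off-diagonal entries is inverse-positive. -/
lemma nonneg_of_mulVec_nonneg {H : Matrix n n ℝ} (hH : H.PosDef)
    (hoff : ∀ i j, i ≠ j → H i j ≤ 0) {x : n → ℝ} (hx : ∀ i, 0 ≤ (H *ᵥ x) i) (i : n) :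
    0 ≤ x i := by
  set m : n → ℝ := fun i => max (-x i) 0 with hm
  set p : n → ℝ := fun i => max (x i) 0 with hp
  have hxpm : x = p - m := by
    ext i
    simp only [hm, hp, Pi.sub_apply]
    rcases le_total 0 (x i) with h | h
    · rw [max_eq_left h, max_eq_right (by linarith)]; ring
    · rw [max_eq_right h, max_eq_left (by linarith)]; ring
  have h1 : 0 ≤ m ⬝ᵥ (H *ᵥ x) :=
    Finset.sum_nonneg fun i _ => mul_nonneg (le_max_right _ _) (hx i)
  have h2 : m ⬝ᵥ (H *ᵥ p) ≤ 0 := by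
    simp only [dotProduct, Matrix.mulVec, Finset.mul_sum]
    refine Finset.sum_nonpos fun i _ => Finset.sum_nonpos fun j _ => ?_
    by_cases hij : i = j
    · subst hij
      have : m i * p i = 0 := by
        simp only [hm, hp]
        rcases le_total 0 (x i) with h | h
        · rw [max_eq_right (by linarith : -x i ≤ 0), zero_mul]
        · rw [max_eq_right h, mul_zero]
      have : m i * (H i i * p i) = 0 := by linear_combination H i i * this
      exact this.le
    · exact mul_nonpos_of_nonneg_of_nonpos (le_max_right _ _)
        (mul_nonpos_of_nonpos_of_nonneg (hoff i j hij) (le_max_right _ _))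
  have hm0 : m = 0 := by
    by_contra hne
    have h3 := hH.dotProduct_mulVec_pos hne
    rw [hxpm, Matrix.mulVec_sub, dotProduct_sub] at h1
    simp only [star_trivial] at h3
    linarith
  have := congrFun hm0 i
  simp only [hm, Pi.zero_apply] at this
  have := le_max_left (-x i) 0
  linarith

lemma dotProduct_inv_mulVec {H : Matrix n n ℝ} (hH : H.PosDef) {x η : n → ℝ}
    (h : H *ᵥ x = η) : H⁻¹ *ᵥ η = x := by
  have := hH.det_pos.ne'
  rw [← h, Matrix.mulVec_mulVec, Matrix.nonsing_inv_mul _ (isUnit_iff_ne_zero.2 this),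
    Matrix.one_mulVec]

lemma mulVec_inv_mulVec {H : Matrix n n ℝ} (hH : H.PosDef) (η : n → ℝ) :
    H *ᵥ (H⁻¹ *ᵥ η) = η := by
  have := hH.det_pos.ne'
  rw [Matrix.mulVec_mulVec, Matrix.mul_nonsing_inv _ (isUnit_iff_ne_zero.2 this),
    Matrix.one_mulVec]

lemma inv_symm {H : Matrix n n ℝ} (hH : H.PosDef) (x y : n → ℝ) :
    x ⬝ᵥ (H⁻¹ *ᵥ y) = y ⬝ᵥ (H⁻¹ *ᵥ x) := by
  have h1 : (H⁻¹)ᵀ = H⁻¹ := by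
    have := hH.inv.isHermitian
    rwa [Matrix.IsHermitian, Matrix.conjTranspose_eq_transpose_of_trivial] at this
  rw [Matrix.dotProduct_mulVec, ← Matrix.mulVec_transpose, h1, dotProduct_comm]

section Step

variable (W : PUnit ⊕ n → PUnit ⊕ n → ℝ)

lemma schr_fromBlocks (hW : ∀ i j, W i j = W j i) (a : ℝ) (h : n → ℝ) :
    schr W (Sum.elim (fun _ => a) h) =
      Matrix.fromBlocks (Matrix.of fun _ _ => a)
        (Matrix.of fun _ j => -W (.inl .unit) (.inr j))
        (Matrix.of fun _ j => -W (.inl .unit) (.inr j))ᴴ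
        (schr (fun i j => W (.inr i) (.inr j)) h) := by
  ext (i | i) (j | j)
  · simp [schr]
  · simp [schr]
  · simp [schr, hW (.inr i)]
  · simp [schr]

/-- The Schur complement of the first diagonal entry. -/
lemma schur_eq {H : Matrix n n ℝ} (w : n → ℝ) (a : ℝ) :
    (Matrix.of fun _ _ => a : Matrix PUnit PUnit ℝ) -
      (Matrix.of fun _ j => -w j) * H⁻¹ * (Matrix.of fun (_ : PUnit) j => -w j)ᴴ =
      Matrix.of fun _ _ => a - w ⬝ᵥ (H⁻¹ *ᵥ w) := by
  ext i j
  simp only [Matrix.sub_apply, Matrix.of_apply, Matrix.mul_assoc]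
  congr 1
  simp [Matrix.mul_apply, dotProduct, Matrix.mulVec]

/-- With `H` the Schrödinger operator of the remaining vertices and `w` the weights towards the first
vertex, the Schur complement `a - w ⬝ H⁻¹ w` governs both determinant and positivity. -/
lemma schr_posDef_iff (hW : ∀ i j, W i j = W j i) (a : ℝ) (h : n → ℝ)
    (hP : (schr (fun i j => W (.inr i) (.inr j)) h).PosDef) :
    (schr W (Sum.elim (fun _ => a) h)).det =
      (schr (fun i j => W (.inr i) (.inr j)) h).det *
        (a - (fun j => W (.inl .unit) (.inr j)) ⬝ᵥ
          ((schr (fun i j => W (.inr i) (.inr j)) h)⁻¹ *ᵥ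
            fun j => W (.inl .unit) (.inr j))) ∧
    ((schr W (Sum.elim (fun _ => a) h)).PosDef ↔
      0 < a - (fun j => W (.inl .unit) (.inr j)) ⬝ᵥ
          ((schr (fun i j => W (.inr i) (.inr j)) h)⁻¹ *ᵥ
            fun j => W (.inl .unit) (.inr j))) := by
  rw [schr_fromBlocks W hW]
  set H := schr (fun i j => W (.inr i) (.inr j)) h with hH
  set w := fun j => W (.inl .unit) (.inr j) with hw
  have hdetH := hP.det_pos
  let : Invertible H := H.invertibleOfIsUnitDet (isUnit_iff_ne_zero.2 hdetH.ne')
  have hdet : (Matrix.fromBlocks (Matrix.of fun _ _ => a) (Matrix.of fun (_ : PUnit) j => -w j)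
        (Matrix.of fun (_ : PUnit) j => -w j)ᴴ H).det = H.det * (a - w ⬝ᵥ (H⁻¹ *ᵥ w)) := by
    rw [Matrix.det_fromBlocks₂₂, Matrix.invOf_eq_nonsing_inv, schur_eq]
    simp
  refine ⟨hdet, ?_⟩
  have hps := Matrix.PosDef.fromBlocks₂₂ (Matrix.of fun _ _ => a)
    (Matrix.of fun (_ : PUnit) j => -w j) hP
  rw [schur_eq] at hps
  have hdiag : (Matrix.of fun (_ _ : PUnit) => a - w ⬝ᵥ (H⁻¹ *ᵥ w)) =
      Matrix.diagonal fun _ => a - w ⬝ᵥ (H⁻¹ *ᵥ w) := by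
    ext i j; simp [Matrix.diagonal]
  rw [hdiag, Matrix.posSemidef_diagonal_iff] at hps
  constructor
  · intro hp
    have := hp.det_pos
    rw [hdet] at this
    exact (pos_iff_pos_of_mul_pos this).1 hdetH
  · intro hpos
    refine (hps.2 fun _ => hpos.le).posDef_iff_det_ne_zero.2 ?_
    rw [hdet]
    positivity

end Step

end Schroedinger

end H22

/-! ### Total mass of the random field -/

namespace H22

open scoped ENNReal Matrix

section Induction

/-- Integrating out one coordinate of the random field produces a field density of the same form,
with the weights towards the removed vertex added to `η`. -/
lemma lintegral_schrDens_inner {n : Type*} [Fintype n] [DecidableEq n]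
    (W : PUnit ⊕ n → PUnit ⊕ n → ℝ)
    (hW : ∀ i j, W i j = W j i) (hW0 : ∀ i j, 0 ≤ W i j) (η : PUnit ⊕ n → ℝ) (hη : ∀ i, 0 ≤ η i)
    (h : n → ℝ) :
    ∫⁻ a : ℝ, schrDens W η (Sum.elim (fun _ => a) h) =
      ENNReal.ofReal (√(2 * π)) *
        schrDens (fun i j => W (.inr i) (.inr j))
          (fun i => η (.inr i) + W (.inl .unit) (.inr i)) h := by
  set W' : n → n → ℝ := fun i j => W (.inr i) (.inr j) with hW'
  set H := schr W' h with hH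
  set w : n → ℝ := fun j => W (.inl .unit) (.inr j) with hw
  set η' : n → ℝ := fun i => η (.inr i) with hη'
  set η₁ : ℝ := η (.inl .unit) with hη₁
  by_cases hP : H.PosDef
  swap
  · have h0 : ∀ a : ℝ, schrDens W η (Sum.elim (fun _ => a) h) = 0 := by
      intro a
      refine if_neg fun hp => hP ?_
      rw [schr_fromBlocks W hW] at hp
      exact hp.submatrix (e := Sum.inr) Sum.inr_injective
    simp_rw [h0]
    rw [lintegral_zero]
    simp [schrDens, ← hH, hP]
  set q : ℝ := w ⬝ᵥ (H⁻¹ *ᵥ w) with hq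
  set A : ℝ := η₁ + w ⬝ᵥ (H⁻¹ *ᵥ η') with hA
  have hA0 : 0 ≤ A := by
    refine add_nonneg (hη _) (Finset.sum_nonneg fun i _ => mul_nonneg (hW0 _ _) ?_)
    refine nonneg_of_mulVec_nonneg hP (fun i j hij => ?_) (fun i => ?_) i
    · simp only [hH, schr, Matrix.of_apply, if_neg hij, hW', Left.neg_nonpos_iff]
      exact hW0 _ _
    · rw [mulVec_inv_mulVec hP]
      exact hη _
  set C : ℝ := Real.exp (-(1 / 2) * (η' ⬝ᵥ (H⁻¹ *ᵥ η')) - 1 / 2 * q - 1 / 2 * (∑ i, ∑ j, H i j)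
    + ∑ i, w i + ∑ i, η' i + η₁) / √H.det with hC
  have hdetpos := hP.det_pos
  have hC0 : 0 ≤ C := by positivity
  have hshift : ∀ y : ℝ, schrDens W η (Sum.elim (fun _ => y + q) h) =
      (Set.Ioi (0 : ℝ)).indicator (fun y => ENNReal.ofReal C * ENNReal.ofReal
        (Real.exp (-(1 / 2) * (A ^ 2 / y) - 1 / 2 * y) / √y)) y := by
    intro y
    obtain ⟨hdet, hiff⟩ := schr_posDef_iff W hW (y + q) h hP
    simp only [← hW', ← hH, ← hw, ← hq, add_sub_cancel_right] at hdet hiff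
    by_cases hy : 0 < y
    · have hp := hiff.2 hy
      rw [Set.indicator_of_mem (by exact hy), schrDens, if_pos hp, hdet,
        ← ENNReal.ofReal_mul hC0]
      congr 1
      -- The solution of `schr W h x = η`, by block elimination.
      have hx : schr W (Sum.elim (fun _ => y + q) h) *ᵥ
          (Sum.elim (fun _ => A / y) (H⁻¹ *ᵥ η' + (A / y) • (H⁻¹ *ᵥ w))) = η := by
        rw [schr_fromBlocks W hW, Matrix.fromBlocks_mulVec]
        ext (i | i)
        · simp only [Sum.elim_inl, Sum.elim_comp_inl, Sum.elim_comp_inr, Pi.add_apply]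
          have e1 : (Matrix.of (fun (_ : PUnit) j => -W (.inl .unit) (.inr j)) *ᵥ
              (H⁻¹ *ᵥ η' + (A / y) • (H⁻¹ *ᵥ w))) i = -(w ⬝ᵥ (H⁻¹ *ᵥ η') + A / y * q) := by
            rw [hq, ← smul_eq_mul, ← dotProduct_smul, ← dotProduct_add, ← neg_dotProduct]
            rfl
          rw [e1]
          have e2 : (Matrix.of (fun (_ _ : PUnit) => y + q) *ᵥ fun _ => A / y) i =
              (y + q) * (A / y) := by
            simp [Matrix.mulVec, dotProduct]
          rw [e2]
          change _ = η₁
          field_simp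
          rw [hA]; ring
        · simp only [Sum.elim_inr, Sum.elim_comp_inl, Sum.elim_comp_inr, Pi.add_apply]
          rw [← hW', ← hH, Matrix.mulVec_add, Matrix.mulVec_smul, mulVec_inv_mulVec hP,
            mulVec_inv_mulVec hP]
          simp [Matrix.mulVec, dotProduct, hη', hw]
          ring
      rw [dotProduct_inv_mulVec hp hx]
      have hquad : η ⬝ᵥ (Sum.elim (fun _ => A / y) (H⁻¹ *ᵥ η' + (A / y) • (H⁻¹ *ᵥ w))) =
          η' ⬝ᵥ (H⁻¹ *ᵥ η') + A ^ 2 / y := by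
        have e1 : η ⬝ᵥ (Sum.elim (fun _ => A / y) (H⁻¹ *ᵥ η' + (A / y) • (H⁻¹ *ᵥ w))) =
            η₁ * (A / y) + η' ⬝ᵥ (H⁻¹ *ᵥ η' + (A / y) • (H⁻¹ *ᵥ w)) := by
          simp [dotProduct, Fintype.sum_sum_type, hη', hη₁]
        rw [e1, dotProduct_add, dotProduct_smul, smul_eq_mul, inv_symm hP η' w, hA]
        ring
      have hsum : ∑ i, ∑ j, schr W (Sum.elim (fun _ => y + q) h) i j =
          y + q - 2 * ∑ i, w i + ∑ i, ∑ j, H i j := by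
        rw [schr_fromBlocks W hW]
        simp [Fintype.sum_sum_type, ← hW', ← hH, Finset.sum_add_distrib, hw]
        ring
      have hsumη : ∑ i, η i = η₁ + ∑ i, η' i := by
        simp [Fintype.sum_sum_type, hη', hη₁]
      rw [hquad, hsum, hsumη, hC, Real.sqrt_mul hdetpos.le, div_mul_div_comm, ← Real.exp_add]
      congr 2
      ring
    · rw [Set.indicator_of_notMem (by exact hy), schrDens, if_neg (fun hp => hy (hiff.1 hp))]
  rw [← lintegral_add_right_eq_self _ q]
  simp_rw [hshift]
  rw [lintegral_indicator measurableSet_Ioi, lintegral_const_mul' _ _ ENNReal.ofReal_ne_top,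
    lintegral_bessel hA0, schrDens, if_pos hP, ← ENNReal.ofReal_mul hC0,
    ← ENNReal.ofReal_mul (Real.sqrt_nonneg _)]
  congr 1
  have hq2 : (fun i => η' i + w i) ⬝ᵥ (H⁻¹ *ᵥ fun i => η' i + w i) =
      η' ⬝ᵥ (H⁻¹ *ᵥ η') + 2 * (w ⬝ᵥ (H⁻¹ *ᵥ η')) + q := by
    change (η' + w) ⬝ᵥ (H⁻¹ *ᵥ (η' + w)) = _
    rw [Matrix.mulVec_add, dotProduct_add, add_dotProduct, add_dotProduct, inv_symm hP η' w]
    ring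
  change _ = _ * (Real.exp (-(1 / 2) * ((fun i => η' i + w i) ⬝ᵥ (H⁻¹ *ᵥ fun i => η' i + w i)) -
    1 / 2 * (∑ i, ∑ j, H i j) + ∑ i, (η' i + w i)) / √H.det)
  rw [hq2, Finset.sum_add_distrib, hC, mul_left_comm, div_mul_eq_mul_div, ← Real.exp_add]
  congr 3
  rw [hA]
  ring

/-- The total mass of the unnormalised density of the random field, by induction on the number of
vertices. -/
theorem lintegral_schrDens {n : Type*} [Fintype n] [DecidableEq n] (W : n → n → ℝ)
    (hW : ∀ i j, W i j = W j i) (hW0 : ∀ i j, 0 ≤ W i j) (η : n → ℝ) (hη : ∀ i, 0 ≤ η i) :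
    ∫⁻ h : n → ℝ, schrDens W η h = ENNReal.ofReal (√(2 * π)) ^ Fintype.card n := by
  suffices hmain : ∀ (α : Type _) [Fintype α], ∀ (_ : DecidableEq α) (W : α → α → ℝ)
      (_ : ∀ i j, W i j = W j i) (_ : ∀ i j, 0 ≤ W i j) (η : α → ℝ) (_ : ∀ i, 0 ≤ η i),
      ∫⁻ h : α → ℝ, schrDens W η h = ENNReal.ofReal (√(2 * π)) ^ Fintype.card α from
    hmain n _ W hW hW0 η hη
  clear! W η
  -- Invariance under relabelling of the vertices.
  have htrans : ∀ (α β : Type _) [Fintype α] [Fintype β] (_ : DecidableEq α) (_ : DecidableEq β)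
      (e : α ≃ β) (W : β → β → ℝ) (η : β → ℝ),
      ∫⁻ h : β → ℝ, schrDens W η h =
        ∫⁻ h : α → ℝ, schrDens (fun i j => W (e i) (e j)) (fun i => η (e i)) h := by
    intro α β _ _ _ _ e W η
    have hmp := volume_measurePreserving_piCongrLeft (fun _ : β => ℝ) e
    rw [← hmp.lintegral_comp_emb (MeasurableEquiv.measurableEmbedding _)]
    refine lintegral_congr fun h => ?_
    have hval : ∀ i, (MeasurableEquiv.piCongrLeft (fun _ : β => ℝ) e) h (e i) = h i := by
      intro i
      exact Equiv.piCongrLeft_apply_apply (fun _ : β => ℝ) e h i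
    set k := (MeasurableEquiv.piCongrLeft (fun _ : β => ℝ) e) h with hk
    have hsub : schr (fun i j => W (e i) (e j)) h = (schr W k).submatrix e e := by
      ext i j
      simp [schr, hval]
    unfold schrDens
    have hpd : (schr (fun i j => W (e i) (e j)) h).PosDef ↔ (schr W k).PosDef := by
      rw [hsub]
      refine ⟨fun hp => ?_, fun hp => hp.submatrix e.injective⟩
      have := hp.submatrix e.symm.injective
      simpa using this
    simp only [hpd]
    rw [hsub, Matrix.det_submatrix_equiv_self, Matrix.inv_submatrix_equiv]
    have h1 : (fun i => η (e i)) ⬝ᵥ ((schr W k)⁻¹.submatrix e e *ᵥ fun i => η (e i)) =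
        η ⬝ᵥ ((schr W k)⁻¹ *ᵥ η) := by
      simp only [dotProduct, Matrix.mulVec, Matrix.submatrix_apply]
      rw [← Equiv.sum_comp e]
      refine Finset.sum_congr rfl fun i _ => ?_
      rw [← Equiv.sum_comp e]
    have h2 : ∑ i, ∑ j, (schr W k).submatrix e e i j = ∑ i, ∑ j, schr W k i j := by
      simp only [Matrix.submatrix_apply]
      rw [← Equiv.sum_comp e]
      refine Finset.sum_congr rfl fun i _ => ?_
      rw [← Equiv.sum_comp e]
    rw [h1, h2, Equiv.sum_comp e η]
  intro α _
  refine Fintype.induction_empty_option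
    (P := fun α _ => ∀ (_ : DecidableEq α) (W : α → α → ℝ)
      (_ : ∀ i j, W i j = W j i) (_ : ∀ i j, 0 ≤ W i j) (η : α → ℝ) (_ : ∀ i, 0 ≤ η i),
      ∫⁻ h : α → ℝ, schrDens W η h = ENNReal.ofReal (√(2 * π)) ^ Fintype.card α)
    ?_ ?_ ?_ α
  · intro α β _ e ih _ W hW hW0 η hη
    let : Fintype α := Fintype.ofEquiv β e.symm
    classical
    rw [htrans α β inferInstance inferInstance e W η, ← Fintype.card_congr e]
    exact ih _ _ (fun _ _ => hW _ _) (fun _ _ => hW0 _ _) _ (fun _ => hη _)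
  · intro _ W hW hW0 η hη
    rw [Measure.volume_pi_eq_dirac (fun x => x.elim), lintegral_dirac]
    have hpd : (schr W fun x => x.elim).PosDef :=
      .of_dotProduct_mulVec_pos (schr_isHermitian hW _)
        fun x hx => absurd (Subsingleton.elim _ _) hx
    simp [schrDens, hpd]
  · intro α _ ih _ W hW hW0 η hη
    classical
    rw [htrans (PUnit ⊕ α) (Option α) inferInstance inferInstance
      ((Equiv.sumComm _ _).trans (Equiv.optionEquivSumPUnit α).symm) W η]
    set e := (Equiv.sumComm _ _).trans (Equiv.optionEquivSumPUnit α).symm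
    set W₂ := fun i j => W (e i) (e j)
    set η₂ := fun i => η (e i)
    have hW₂ : ∀ i j, W₂ i j = W₂ j i := fun _ _ => hW _ _
    have hmp := (volume_measurePreserving_sumPiEquivProdPi_symm
      (fun _ : PUnit ⊕ α => ℝ))
    rw [← hmp.lintegral_comp_emb (MeasurableEquiv.measurableEmbedding _)]
    have hmeas : Measurable fun a => schrDens W₂ η₂
        ((MeasurableEquiv.sumPiEquivProdPi fun _ : PUnit ⊕ α => ℝ).symm a) :=
      (measurable_schrDens hW₂ η₂).comp (MeasurableEquiv.measurable _)
    rw [Measure.volume_eq_prod, lintegral_prod_symm _ hmeas.aemeasurable]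
    have hinner : ∀ h : α → ℝ, ∫⁻ x : PUnit → ℝ, schrDens W₂ η₂
        ((MeasurableEquiv.sumPiEquivProdPi fun _ : PUnit ⊕ α => ℝ).symm (x, h)) =
        ENNReal.ofReal (√(2 * π)) *
        schrDens (fun i j => W₂ (.inr i) (.inr j))
          (fun i => η₂ (.inr i) + W₂ (.inl .unit) (.inr i)) h := by
      intro h
      rw [← lintegral_schrDens_inner W₂ hW₂ (fun _ _ => hW0 _ _) η₂ (fun _ => hη _) h]
      have hmp2 := (volume_preserving_funUnique PUnit ℝ)
      rw [← hmp2.lintegral_comp_emb (MeasurableEquiv.measurableEmbedding _)]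
      refine lintegral_congr fun x => ?_
      congr 1
    simp_rw [hinner]
    rw [lintegral_const_mul' _ _ ENNReal.ofReal_ne_top, ih _ _ (fun _ _ => hW₂ _ _)
      (fun _ _ => hW0 _ _) _ (fun _ => add_nonneg (hη _) (hW0 _ _)), Fintype.card_option,
      pow_succ, mul_comm]

end Induction

end H22

/-! ### The change of variables between the field and `t` -/

namespace H22

open scoped ENNReal Matrix

section ChangeOfVariables

variable {V : Type*} [Fintype V]

/-- The field `h_i = Σ_j W_ij e^{t_j - t_i} + ε_i e^{-t_i}` attached to `t`.  Equivalently, it is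
the diagonal for which `schr W h` maps `e^t` to `ε`. -/
noncomputable def fieldOf (W : V → V → ℝ) (ε t : V → ℝ) : V → ℝ := fun i =>
  ∑ j, W i j * Real.exp (t j - t i) + ε i * Real.exp (-t i)

/-- The part of the energy that depends on `t` only. -/
noncomputable def tEnergy (W : V → V → ℝ) (ε t : V → ℝ) : ℝ :=
  1 / 2 * ∑ i, ∑ j, W i j * (Real.cosh (t i - t j) - 1) + ∑ i, ε i * (Real.cosh (t i) - 1)

/-- The Dirichlet form of the weighted graph with conductances `W_ij e^{t_i+t_j}` and killing
`ε_i e^{t_i}`. -/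
noncomputable def dirichlet (W : V → V → ℝ) (ε t y : V → ℝ) : ℝ :=
  1 / 2 * ∑ i, ∑ j, W i j * Real.exp (t i + t j) * (y i - y j) ^ 2 +
    ∑ i, ε i * Real.exp (t i) * y i ^ 2

variable [DecidableEq V]

lemma schr_mulVec {W : V → V → ℝ} (hW1 : ∀ i, W i i = 0) (h x : V → ℝ) (i : V) :
    (schr W h *ᵥ x) i = h i * x i - ∑ j, W i j * x j := by
  have h1 : ∀ j, schr W h i j * x j = (if i = j then h i * x i else 0) - W i j * x j := by
    intro j
    by_cases hij : i = j
    · subst hij; simp [schr, hW1]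
    · simp [schr, hij]
  simp only [Matrix.mulVec, dotProduct, h1, Finset.sum_sub_distrib]
  simp

lemma schr_mulVec_exp {W : V → V → ℝ} (hW1 : ∀ i, W i i = 0) (ε t : V → ℝ) :
    schr W (fieldOf W ε t) *ᵥ (fun i => Real.exp (t i)) = ε := by
  ext i
  rw [schr_mulVec hW1, fieldOf, add_mul, Finset.sum_mul, mul_assoc, ← Real.exp_add,
    neg_add_cancel, Real.exp_zero, mul_one]
  have : ∀ j, W i j * Real.exp (t j - t i) * Real.exp (t i) = W i j * Real.exp (t j) := by
    intro j
    rw [mul_assoc, ← Real.exp_add, sub_add_cancel]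
  simp [this]

/-- The ground state transform: conjugating the Schrödinger operator by `e^t` gives the Dirichlet
form. -/
lemma schr_quadForm {W : V → V → ℝ} (hW : ∀ i j, W i j = W j i) (hW1 : ∀ i, W i i = 0)
    (ε t y : V → ℝ) :
    (fun i => Real.exp (t i) * y i) ⬝ᵥ (schr W (fieldOf W ε t) *ᵥ fun i => Real.exp (t i) * y i) =
      dirichlet W ε t y := by
  have h1 : ∀ i, Real.exp (t i) * y i *
      (schr W (fieldOf W ε t) *ᵥ fun i => Real.exp (t i) * y i) i =
      ∑ j, (W i j * Real.exp (t i + t j) * y i ^ 2 -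
        W i j * Real.exp (t i + t j) * (y i * y j)) + ε i * Real.exp (t i) * y i ^ 2 := by
    intro i
    rw [schr_mulVec hW1, fieldOf, Finset.sum_sub_distrib, add_mul, mul_sub, mul_add,
      Finset.sum_mul, Finset.mul_sum, Finset.mul_sum]
    have e1 : ∀ j, Real.exp (t i) * y i * (W i j * Real.exp (t j - t i) * (Real.exp (t i) * y i)) =
        W i j * Real.exp (t i + t j) * y i ^ 2 := by
      intro j
      have : Real.exp (t i + t j) = Real.exp (t i) * Real.exp (t j - t i) * Real.exp (t i) := by
        rw [← Real.exp_add, ← Real.exp_add]; ring_nf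
      rw [this]; ring
    have e2 : ∀ j, Real.exp (t i) * y i * (W i j * (Real.exp (t j) * y j)) =
        W i j * Real.exp (t i + t j) * (y i * y j) := by
      intro j
      rw [Real.exp_add]; ring
    have e3 : Real.exp (t i) * y i * (ε i * Real.exp (-t i) * (Real.exp (t i) * y i)) =
        ε i * Real.exp (t i) * y i ^ 2 := by
      have : Real.exp (-t i) * Real.exp (t i) = 1 := by rw [← Real.exp_add]; simp
      linear_combination (ε i * Real.exp (t i) * y i ^ 2) * this
    simp only [e1, e2, e3]
    ring
  have h2 : ∑ i, ∑ j, W i j * Real.exp (t i + t j) * y i ^ 2 =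
      ∑ i, ∑ j, W i j * Real.exp (t i + t j) * y j ^ 2 := by
    rw [Finset.sum_comm]
    refine Finset.sum_congr rfl fun i _ => Finset.sum_congr rfl fun j _ => ?_
    rw [hW, add_comm]
  have h3 : ∑ i, ∑ j, W i j * Real.exp (t i + t j) * (y i - y j) ^ 2 =
      ∑ i, ∑ j, W i j * Real.exp (t i + t j) * y i ^ 2 +
      ∑ i, ∑ j, W i j * Real.exp (t i + t j) * y j ^ 2 -
      2 * ∑ i, ∑ j, W i j * Real.exp (t i + t j) * (y i * y j) := by
    simp only [Finset.mul_sum, ← Finset.sum_add_distrib, ← Finset.sum_sub_distrib]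
    refine Finset.sum_congr rfl fun i _ => Finset.sum_congr rfl fun j _ => ?_
    ring
  simp only [dotProduct, h1, dirichlet, h3, ← h2]
  simp only [Finset.sum_add_distrib, Finset.sum_sub_distrib]
  ring

variable {G : SimpleGraph V} {W : V → V → ℝ} {ε : V → ℝ}

/-- On a connected graph a property that is stable under passing to neighbours and holds at one
vertex holds everywhere. -/
lemma connected_propagate (hG : G.Connected) {P : V → Prop}
    (hP : ∀ i j, G.Adj i j → P i → P j) {i : V} (hi : P i) (j : V) : P j := by
  obtain ⟨p⟩ := hG i j
  induction p with
  | nil => exact hi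
  | cons h _ ih => exact ih (hP _ _ h hi)

/-- If the Dirichlet form vanishes at `y`, then `y` is constant because the graph is connected, and
zero at any pinned vertex. -/
lemma schr_fieldOf_posDef (hG : G.Connected) (hW : ∀ i j, W i j = W j i)
    (hW0 : ∀ i j, 0 ≤ W i j) (hW1 : ∀ i, W i i = 0) (hWG : ∀ i j, G.Adj i j → 0 < W i j)
    (hε : ∀ i, 0 ≤ ε i) (hε' : ∃ i, 0 < ε i) (t : V → ℝ) :
    (schr W (fieldOf W ε t)).PosDef := by
  refine .of_dotProduct_mulVec_pos (schr_isHermitian hW _) fun x hx => ?_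
  set y : V → ℝ := fun i => Real.exp (-t i) * x i with hy
  have hxy : x = fun i => Real.exp (t i) * y i := by
    ext i
    rw [hy, ← mul_assoc, ← Real.exp_add]; simp
  rw [star_trivial, hxy, schr_quadForm hW hW1]
  have hnn1 : ∀ i ∈ Finset.univ, 0 ≤ ∑ j, W i j * Real.exp (t i + t j) * (y i - y j) ^ 2 :=
    fun i _ => Finset.sum_nonneg fun j _ =>
      mul_nonneg (mul_nonneg (hW0 _ _) (Real.exp_pos _).le) (sq_nonneg _)
  have hnn2 : ∀ i ∈ Finset.univ, 0 ≤ ε i * Real.exp (t i) * y i ^ 2 := fun i _ =>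
    mul_nonneg (mul_nonneg (hε _) (Real.exp_pos _).le) (sq_nonneg _)
  have hs1 := Finset.sum_nonneg hnn1
  have hs2 := Finset.sum_nonneg hnn2
  have hnn : 0 ≤ dirichlet W ε t y := by unfold dirichlet; positivity
  refine lt_of_le_of_ne hnn fun h0 => hx ?_
  unfold dirichlet at h0
  have hz1 : ∑ i, ∑ j, W i j * Real.exp (t i + t j) * (y i - y j) ^ 2 = 0 := by linarith
  have hz2 : ∑ i, ε i * Real.exp (t i) * y i ^ 2 = 0 := by linarith
  obtain ⟨i₀, hi₀⟩ := hε'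
  have hyi₀ : y i₀ = 0 := by
    have := (Finset.sum_eq_zero_iff_of_nonneg hnn2).1 hz2 i₀ (Finset.mem_univ _)
    have h3 := Real.exp_pos (t i₀)
    have h4 : ε i₀ * Real.exp (t i₀) ≠ 0 := by positivity
    simpa using (mul_eq_zero.1 this).resolve_left h4
  have hyall : ∀ j, y j = 0 := by
    refine connected_propagate hG (P := fun i => y i = 0) (fun i j hij hi => ?_) hyi₀
    have h1 := (Finset.sum_eq_zero_iff_of_nonneg hnn1).1 hz1 i (Finset.mem_univ _)
    have h2 := (Finset.sum_eq_zero_iff_of_nonneg fun j _ =>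
      mul_nonneg (mul_nonneg (hW0 _ _) (Real.exp_pos _).le) (sq_nonneg _)).1 h1 j
        (Finset.mem_univ _)
    have h3 := Real.exp_pos (t i + t j)
    have h4 : W i j * Real.exp (t i + t j) ≠ 0 := (mul_pos (hWG i j hij) h3).ne'
    have h5 := (mul_eq_zero.1 h2).resolve_left h4
    rw [sq_eq_zero_iff, hi] at h5
    linarith
  rw [hxy]
  ext i
  simp [hyall]

/-- Every field with `schr W h > 0` comes from some `t`, namely `e^t = (schr W h)⁻¹ ε`. -/
lemma exists_fieldOf_eq (hG : G.Connected)
    (hW0 : ∀ i j, 0 ≤ W i j) (hW1 : ∀ i, W i i = 0) (hWG : ∀ i j, G.Adj i j → 0 < W i j)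
    (hε : ∀ i, 0 ≤ ε i) (hε' : ∃ i, 0 < ε i) {h : V → ℝ} (hp : (schr W h).PosDef) :
    ∃ t, fieldOf W ε t = h := by
  set x := (schr W h)⁻¹ *ᵥ ε with hx
  have hHx : schr W h *ᵥ x = ε := mulVec_inv_mulVec hp ε
  have hx0 : ∀ i, 0 ≤ x i := by
    refine nonneg_of_mulVec_nonneg hp (fun i j hij => ?_) (fun i => by rw [hHx]; exact hε i)
    simp only [schr, Matrix.of_apply, if_neg hij, Left.neg_nonpos_iff]
    exact hW0 _ _
  have hrow : ∀ i, h i * x i - ∑ j, W i j * x j = ε i := fun i => by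
    rw [← schr_mulVec hW1, hHx]
  have hnn : ∀ i, ∀ j ∈ Finset.univ, 0 ≤ W i j * x j := fun i j _ => mul_nonneg (hW0 _ _) (hx0 _)
  have hxpos : ∀ i, 0 < x i := by
    intro i
    refine lt_of_le_of_ne (hx0 i) fun hi => ?_
    have hall : ∀ j, x j = 0 := by
      refine connected_propagate hG (P := fun i => x i = 0) (fun i j hij hi => ?_) hi.symm
      have h1 := hrow i
      rw [hi, mul_zero] at h1
      have h2 := Finset.sum_nonneg (hnn i)
      have h3 : ∑ j, W i j * x j = 0 := by linarith [hε i]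
      have h4 := (Finset.sum_eq_zero_iff_of_nonneg (hnn i)).1 h3 j (Finset.mem_univ _)
      exact (mul_eq_zero.1 h4).resolve_left (hWG i j hij).ne'
    obtain ⟨i₀, hi₀⟩ := hε'
    have := hrow i₀
    simp [hall] at this
    linarith
  refine ⟨fun i => Real.log (x i), funext fun i => ?_⟩
  simp only [fieldOf, Real.exp_sub, Real.exp_neg, Real.exp_log (hxpos _)]
  have hi := hxpos i
  have h1 : ∑ j, W i j * (x j / x i) = (∑ j, W i j * x j) / x i := by
    rw [Finset.sum_div]
    exact Finset.sum_congr rfl fun j _ => by ring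
  rw [h1]
  have := hrow i
  field_simp
  linarith

/-- The vector `e^t` is recovered from the field as `(schr W h)⁻¹ ε`. -/
lemma fieldOf_injective (hG : G.Connected) (hW : ∀ i j, W i j = W j i)
    (hW0 : ∀ i j, 0 ≤ W i j) (hW1 : ∀ i, W i i = 0) (hWG : ∀ i j, G.Adj i j → 0 < W i j)
    (hε : ∀ i, 0 ≤ ε i) (hε' : ∃ i, 0 < ε i) : Function.Injective (fieldOf W ε) := by
  intro t t' h
  have hp := schr_fieldOf_posDef hG hW hW0 hW1 hWG hε hε' t
  have h1 := dotProduct_inv_mulVec hp (schr_mulVec_exp hW1 ε t)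
  have h2 := dotProduct_inv_mulVec (h ▸ hp) (schr_mulVec_exp hW1 ε t')
  rw [h, h2] at h1
  ext i
  exact Real.exp_injective (congrFun h1 i).symm

/-- The Jacobian matrix of `t ↦ fieldOf W ε t` is a conjugate of `-schr W (fieldOf W ε t)`. -/
noncomputable def fieldJac (W : V → V → ℝ) (ε t : V → ℝ) : Matrix V V ℝ :=
  -(Matrix.diagonal (fun i => Real.exp (-t i)) * schr W (fieldOf W ε t) *
    Matrix.diagonal (fun i => Real.exp (t i)))

lemma abs_det_fieldJac (W : V → V → ℝ) (ε t : V → ℝ) :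
    |(fieldJac W ε t).det| = |(schr W (fieldOf W ε t)).det| := by
  rw [fieldJac, Matrix.det_neg, abs_mul, abs_pow, abs_neg, abs_one, one_pow, one_mul,
    Matrix.det_mul, Matrix.det_mul, Matrix.det_diagonal, Matrix.det_diagonal, mul_right_comm,
    ← Finset.prod_mul_distrib]
  simp [← Real.exp_add]

/-- The derivative of `fieldOf` in direction `v` is `-e^{-t} H (e^t v)`, where `H` is the Schrödinger
operator of the field. -/
lemma hasFDerivAt_fieldOf (hW1 : ∀ i, W i i = 0) (t : V → ℝ) :
    HasFDerivAt (fieldOf W ε) (LinearMap.toContinuousLinearMap (Matrix.toLin' (fieldJac W ε t)))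
      t := by
  rw [hasFDerivAt_pi']
  intro i
  have hproj : ∀ k : V, HasFDerivAt (fun t : V → ℝ => t k)
      (ContinuousLinearMap.proj (R := ℝ) (φ := fun _ : V => ℝ) k) t := fun k =>
    hasFDerivAt_apply k t
  have h1 : HasFDerivAt (fun t : V → ℝ => ∑ j, W i j * Real.exp (t j - t i) + ε i * Real.exp (-t i))
      _ t := (HasFDerivAt.fun_sum fun j (_ : j ∈ Finset.univ) =>
        (((hproj j).sub (hproj i)).exp.const_mul (W i j))).add
        ((hproj i).neg.exp.const_mul (ε i))
  refine h1.congr_fderiv ?_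
  ext v
  have e2 : (fieldJac W ε t *ᵥ v) i = -(Real.exp (-t i) *
      (schr W (fieldOf W ε t) *ᵥ fun j => Real.exp (t j) * v j) i) := by
    rw [fieldJac, Matrix.neg_mulVec, ← Matrix.mulVec_mulVec, ← Matrix.mulVec_mulVec]
    simp only [Pi.neg_apply, Matrix.mulVec_diagonal]
    congr 3
    ext j
    rw [Matrix.mulVec_diagonal]
  simp only [add_apply, sum_apply, smul_apply, sub_apply, neg_apply, Pi.sub_apply, Pi.neg_apply,
    ContinuousLinearMap.proj_apply, smul_eq_mul, ContinuousLinearMap.comp_apply,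
    LinearMap.coe_toContinuousLinearMap', Matrix.toLin'_apply, e2]
  rw [schr_mulVec hW1, fieldOf, mul_sub, Finset.mul_sum]
  have e3 : ∀ j, Real.exp (-t i) * (W i j * (Real.exp (t j) * v j)) =
      W i j * (Real.exp (t j - t i) * v j) := by
    intro j
    rw [sub_eq_add_neg, Real.exp_add]; ring
  have e4 : Real.exp (-t i) * Real.exp (t i) = 1 := by rw [← Real.exp_add]; simp
  simp only [e3, mul_sub, Finset.sum_sub_distrib]
  have e5 : ∑ j, W i j * (Real.exp (t j - t i) * v i) =
      (∑ j, W i j * Real.exp (t j - t i)) * v i := by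
    rw [Finset.sum_mul]
    exact Finset.sum_congr rfl fun j _ => by ring
  rw [e5]
  linear_combination
    (∑ j, W i j * Real.exp (t j - t i) + ε i * Real.exp (-t i)) * v i * e4

/-- In the `t` coordinates the exponent of the field density is the energy of `t`. -/
lemma schrDens_fieldOf (hW : ∀ i j, W i j = W j i) (hW1 : ∀ i, W i i = 0) {t : V → ℝ}
    (hp : (schr W (fieldOf W ε t)).PosDef) :
    schrDens W ε (fieldOf W ε t) = ENNReal.ofReal
      (Real.exp (-tEnergy W ε t) / √(schr W (fieldOf W ε t)).det) := by
  rw [schrDens, if_pos hp, dotProduct_inv_mulVec hp (schr_mulVec_exp hW1 ε t)]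
  congr 3
  have h1 : ∑ i, ∑ j, schr W (fieldOf W ε t) i j =
      ∑ i, (fieldOf W ε t i - ∑ j, W i j) := by
    refine Finset.sum_congr rfl fun i _ => ?_
    have := schr_mulVec hW1 (fieldOf W ε t) (fun _ => 1) i
    simpa [Matrix.mulVec, dotProduct] using this
  have h2 : ∑ i, ∑ j, W i j * Real.exp (t j - t i) = ∑ i, ∑ j, W i j * Real.exp (t i - t j) := by
    rw [Finset.sum_comm]
    exact Finset.sum_congr rfl fun i _ => Finset.sum_congr rfl fun j _ => by rw [hW]
  have h3 : ∑ i, ∑ j, W i j * (Real.cosh (t i - t j) - 1) =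
      1 / 2 * (∑ i, ∑ j, W i j * Real.exp (t i - t j)) +
      1 / 2 * (∑ i, ∑ j, W i j * Real.exp (t j - t i)) - ∑ i, ∑ j, W i j := by
    simp only [Finset.mul_sum, ← Finset.sum_add_distrib, ← Finset.sum_sub_distrib]
    refine Finset.sum_congr rfl fun i _ => Finset.sum_congr rfl fun j _ => ?_
    rw [Real.cosh_eq, neg_sub]; ring
  have h4 : ∑ i, ε i * (Real.cosh (t i) - 1) =
      1 / 2 * (∑ i, ε i * Real.exp (t i)) + 1 / 2 * (∑ i, ε i * Real.exp (-t i)) - ∑ i, ε i := by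
    simp only [Finset.mul_sum, ← Finset.sum_add_distrib, ← Finset.sum_sub_distrib]
    refine Finset.sum_congr rfl fun i _ => ?_
    rw [Real.cosh_eq]; ring
  rw [h1, tEnergy, h3, h4, ← h2]
  simp only [fieldOf, Finset.sum_sub_distrib, Finset.sum_add_distrib, dotProduct]
  ring

/-- The `t`-marginal, after integrating out `s` and summing over trees, has the right mass. -/
theorem lintegral_tMarginal (hG : G.Connected) (hW : ∀ i j, W i j = W j i)
    (hW0 : ∀ i j, 0 ≤ W i j) (hW1 : ∀ i, W i i = 0) (hWG : ∀ i j, G.Adj i j → 0 < W i j)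
    (hε : ∀ i, 0 ≤ ε i) (hε' : ∃ i, 0 < ε i) :
    ∫⁻ t : V → ℝ, ENNReal.ofReal
      (√(schr W (fieldOf W ε t)).det * Real.exp (-tEnergy W ε t)) =
      ENNReal.ofReal (√(2 * π)) ^ Fintype.card V := by
  have hpd := schr_fieldOf_posDef hG hW hW0 hW1 hWG hε hε'
  have himg : fieldOf W ε '' Set.univ = {h | (schr W h).PosDef} := by
    ext h
    simp only [Set.image_univ, Set.mem_range, Set.mem_ofPred_eq]
    refine ⟨?_, fun hp => exists_fieldOf_eq hG hW0 hW1 hWG hε hε' hp⟩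
    rintro ⟨t, rfl⟩
    exact hpd t
  have hind : {h | (schr W h).PosDef}.indicator (schrDens W ε) = schrDens W ε := by
    rw [Set.indicator_eq_self]
    intro h hh
    by_contra hp
    exact hh (if_neg hp)
  have hcv := lintegral_image_eq_lintegral_abs_det_fderiv_mul volume MeasurableSet.univ
    (fun t _ => (hasFDerivAt_fieldOf (ε := ε) hW1 t).hasFDerivWithinAt)
    (fieldOf_injective hG hW hW0 hW1 hWG hε hε').injOn (schrDens W ε)
  rw [himg, ← lintegral_indicator (measurableSet_posDef hW), hind,
    lintegral_schrDens W hW hW0 ε hε, Measure.restrict_univ] at hcv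
  rw [hcv]
  refine lintegral_congr fun t => ?_
  have hd := (hpd t).det_pos
  rw [schrDens_fieldOf hW hW1 (hpd t), LinearMap.det_toContinuousLinearMap, LinearMap.det_toLin',
    abs_det_fieldJac, abs_of_pos hd, ← ENNReal.ofReal_mul hd.le]
  congr 1
  nth_rewrite 2 [← Real.mul_self_sqrt hd.le]
  have := Real.sqrt_pos.2 hd
  field_simp

end ChangeOfVariables

end H22

/-! ### Assembling the total mass -/

namespace H22

open scoped ENNReal Matrix

section Assembly

variable {V : Type*} [Fintype V] [DecidableEq V]

/-- The conductances `β`, set to `0` off the edges of `G`. -/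
noncomputable def condOf (G : SimpleGraph V) (β : V → V → ℝ) : V → V → ℝ := fun i j =>
  if G.Adj i j then β i j else 0

lemma aug_adj_some (G : SimpleGraph V) (i j : V) :
    (aug G).Adj (some i) (some j) ↔ G.Adj i j := by
  simp only [aug, SimpleGraph.fromRel_adj, ne_eq, Option.some.injEq]
  constructor
  · rintro ⟨-, h | h⟩
    exacts [h, h.symm]
  · exact fun h => ⟨h.ne, Or.inl h⟩

lemma aug_adj_some_none (G : SimpleGraph V) (i : V) : (aug G).Adj (some i) none := by
  simp [aug, SimpleGraph.fromRel_adj]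

lemma aug_adj_none_some (G : SimpleGraph V) (i : V) : (aug G).Adj none (some i) :=
  (aug_adj_some_none G i).symm

/-- Each edge is counted twice when summing over ordered pairs of adjacent vertices. -/
lemma two_mul_sum_edges {α : Type*} [Fintype α] [DecidableEq α] (K : SimpleGraph α)
    (q : Sym2 α → ℝ) :
    2 * ∑ e ∈ Finset.univ.filter (fun e : Sym2 α => e ∈ K.edgeSet), q e =
      ∑ a, ∑ b, if K.Adj a b then q s(a, b) else 0 := by
  rw [← Finset.sum_product', ← Finset.sum_filter (fun x : α × α => K.Adj x.1 x.2)
    (fun x => q s(x.1, x.2)),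
    ← Finset.sum_fiberwise_of_maps_to (g := fun x : α × α => s(x.1, x.2))
      (t := Finset.univ.filter (fun e : Sym2 α => e ∈ K.edgeSet)), Finset.mul_sum]
  · refine Finset.sum_congr rfl fun e he => ?_
    induction e using Sym2.ind with
    | _ a b =>
      have hab : K.Adj a b := by simpa using he
      have : ((Finset.univ ×ˢ Finset.univ).filter (fun x : α × α => K.Adj x.1 x.2)).filter
          (fun x => s(x.1, x.2) = s(a, b)) = {(a, b), (b, a)} := by
        ext ⟨c, d⟩
        simp only [Finset.mem_filter, Finset.mem_product, Finset.mem_univ, and_self, true_and,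
          Sym2.eq_iff, Finset.mem_insert, Finset.mem_singleton, Prod.mk.injEq]
        constructor
        · exact fun h => h.2
        · rintro (⟨rfl, rfl⟩ | ⟨rfl, rfl⟩)
          exacts [⟨hab, by simp⟩, ⟨hab.symm, by simp⟩]
      rw [this, Finset.sum_pair (by simp [hab.ne]), Sym2.eq_swap (a := b), two_mul]
  · rintro ⟨a, b⟩ h
    simpa using h

lemma bres_symm {β : V → V → ℝ} (hβ : ∀ i j, β i j = β j i) (ε : V → ℝ) (a b : Option V) :
    bres β ε a b = bres β ε b a := by
  cases a <;> cases b <;> simp [bres, hβ]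

lemma Bfun_symm (t s : V → ℝ) (a b : Option V) : Bfun t s a b = Bfun t s b a := by
  rw [Bfun, Bfun, ← Real.cosh_neg, neg_sub, add_comm (extV t a)]
  ring

lemma esym_mk {α : Type*} {f : α → α → ℝ} (hf : ∀ a b, f a b = f b a) (a b : α) :
    esym f s(a, b) = f a b := by
  rw [esym, Sym2.lift_mk]
  change (f a b + f b a) / 2 = _
  rw [hf b a]; ring

lemma treeW_mk {β : V → V → ℝ} (hβ : ∀ i j, β i j = β j i) (ε t : V → ℝ) (a b : Option V) :
    treeW β ε t s(a, b) = bres β ε a b * Real.exp (extV t a + extV t b) :=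
  esym_mk (fun a b => by rw [bres_symm hβ, add_comm]) a b

/-- The product of the Gibbs factors splits into the energy of `t` and a quadratic form in `s`. -/
lemma prod_gibbs {G : SimpleGraph V} {β : V → V → ℝ} (hβ : ∀ i j, β i j = β j i)
    (ε t s : V → ℝ) :
    ∏ e ∈ Finset.univ.filter (fun e : Sym2 (Option V) => e ∈ (aug G).edgeSet), gibbs β ε t s e =
      Real.exp (-(tEnergy (condOf G β) ε t + 1 / 2 * dirichlet (condOf G β) ε t s)) := by
  set q : Sym2 (Option V) → ℝ := esym fun a b => bres β ε a b * (Bfun t s a b - 1) with hq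
  have hqm : ∀ a b, q s(a, b) = bres β ε a b * (Bfun t s a b - 1) := 
    esym_mk (fun a b => by rw [bres_symm hβ, Bfun_symm])
  have h1 : ∀ e, gibbs β ε t s e = Real.exp (-q e) := by
    intro e
    induction e using Sym2.ind with
    | _ a b =>
      rw [hqm, gibbs, esym_mk (fun a b => by rw [bres_symm hβ, Bfun_symm])]
  simp only [h1]
  rw [← Real.exp_sum, Finset.sum_neg_distrib]
  congr 2
  have h2 := two_mul_sum_edges (aug G) q
  simp only [Fintype.sum_option, aug_adj_some, aug_adj_some_none, aug_adj_none_some, hqm, if_true,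
    SimpleGraph.irrefl, if_false, bres, Bfun, extV, Option.elim, Finset.sum_add_distrib] at h2
  have h3 : ∀ i j, (if G.Adj i j then β i j * (Real.cosh (t i - t j) +
      1 / 2 * (s i - s j) ^ 2 * Real.exp (t i + t j) - 1) else 0) =
      condOf G β i j * (Real.cosh (t i - t j) - 1) +
        1 / 2 * (condOf G β i j * Real.exp (t i + t j) * (s i - s j) ^ 2) := by
    intro i j
    rw [condOf]
    split_ifs <;> ring
  have h4 : ∀ i, ε i * (Real.cosh (0 - t i) + 1 / 2 * (0 - s i) ^ 2 * Real.exp (0 + t i) - 1) =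
      ε i * (Real.cosh (t i) - 1) + 1 / 2 * (ε i * Real.exp (t i) * s i ^ 2) := by
    intro i
    rw [zero_sub, Real.cosh_neg, zero_add]; ring
  have h5 : ∀ i, ε i * (Real.cosh (t i - 0) + 1 / 2 * (s i - 0) ^ 2 * Real.exp (t i + 0) - 1) =
      ε i * (Real.cosh (t i) - 1) + 1 / 2 * (ε i * Real.exp (t i) * s i ^ 2) := by
    intro i
    rw [sub_zero, add_zero]; ring
  simp only [h3, h4, h5, Finset.sum_add_distrib, ← Finset.mul_sum] at h2
  rw [tEnergy, dirichlet]
  linarith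

/-- The matrix `e^t H e^t` with `H` the Schrödinger operator of the field of `t`; it is the
Laplacian with conductances `β_ij e^{t_i+t_j}` and killing `ε_i e^{t_i}`. -/
noncomputable def lapOf (W : V → V → ℝ) (ε t : V → ℝ) : Matrix V V ℝ :=
  Matrix.diagonal (fun i => Real.exp (t i)) * schr W (fieldOf W ε t) *
    Matrix.diagonal (fun i => Real.exp (t i))

lemma lapOf_apply (W : V → V → ℝ) (ε t : V → ℝ) (i j : V) :
    lapOf W ε t i j = Real.exp (t i) * schr W (fieldOf W ε t) i j * Real.exp (t j) := by
  rw [lapOf, Matrix.mul_diagonal, Matrix.diagonal_mul]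

lemma det_lapOf (W : V → V → ℝ) (ε t : V → ℝ) :
    (lapOf W ε t).det = (∏ i, Real.exp (t i)) ^ 2 * (schr W (fieldOf W ε t)).det := by
  rw [lapOf, Matrix.det_mul, Matrix.det_mul, Matrix.det_diagonal]; ring

lemma lapOf_quadForm {W : V → V → ℝ} (hW : ∀ i j, W i j = W j i) (hW1 : ∀ i, W i i = 0)
    (ε t s : V → ℝ) : s ⬝ᵥ (lapOf W ε t *ᵥ s) = dirichlet W ε t s := by
  rw [← schr_quadForm hW hW1]
  simp only [dotProduct, Matrix.mulVec, lapOf_apply, Finset.mul_sum]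
  exact Finset.sum_congr rfl fun i _ => Finset.sum_congr rfl fun j _ => by ring

lemma lapOf_posDef {W : V → V → ℝ} (hW : ∀ i j, W i j = W j i) (hW1 : ∀ i, W i i = 0)
    {ε t : V → ℝ} (hp : (schr W (fieldOf W ε t)).PosDef) : (lapOf W ε t).PosDef := by
  refine .of_dotProduct_mulVec_pos ?_ fun x hx => ?_
  · ext i j
    have := hp.1.apply i j
    simp only [Matrix.conjTranspose_apply, lapOf_apply, star_trivial] at this ⊢
    rw [this]; ring
  · rw [star_trivial, lapOf_quadForm hW hW1, ← schr_quadForm hW hW1]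
    refine hp.dotProduct_mulVec_pos fun h0 => hx ?_
    ext i
    have := congrFun h0 i
    exact (mul_eq_zero.1 this).resolve_left (Real.exp_ne_zero _)

/-- The weighted spanning trees of the augmented graph are counted by the determinant of the
Laplacian. -/
lemma sum_trees {G : SimpleGraph V} {β : V → V → ℝ} (hβ : ∀ i j, β i j = β j i)
    (ε t : V → ℝ) :
    ∑ T ∈ STrees (aug G), ∏ e ∈ T, treeW β ε t e = (lapOf (condOf G β) ε t).det := by
  rw [← matrix_tree]
  congr 1
  ext i j
  rw [lapOf_apply, Matrix.of_apply, schr, Matrix.of_apply]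
  simp only [Fintype.sum_option, aug_adj_some, aug_adj_some_none, treeW_mk hβ, if_true, bres, extV,
    Option.elim, add_zero]
  by_cases hij : i = j
  · subst hij
    simp only [if_true, SimpleGraph.irrefl, if_false, sub_zero]
    rw [fieldOf, mul_add, add_mul, Finset.mul_sum, Finset.sum_mul, add_comm]
    congr 1
    · refine Finset.sum_congr rfl fun j _ => ?_
      have : Real.exp (t i + t j) = Real.exp (t i) * Real.exp (t j - t i) * Real.exp (t i) := by
        rw [← Real.exp_add, ← Real.exp_add]; ring_nf
      rw [condOf]
      split_ifs
      · rw [this]; ring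
      · ring
    · have : Real.exp (-t i) * Real.exp (t i) = 1 := by rw [← Real.exp_add]; simp
      linear_combination (-ε i * Real.exp (t i)) * this
  · simp only [hij, if_false, condOf, zero_sub]
    split_ifs
    · rw [Real.exp_add]; ring
    · ring

variable {G : SimpleGraph V} {β : V → V → ℝ} {ε : V → ℝ}

lemma sum_dens (hβ : ∀ i j, β i j = β j i) (t s : V → ℝ) :
    ∑ T ∈ STrees (aug G), dens G β ε t s T =
      (∏ j, Real.exp (-t j) / (2 * Real.pi)) *
        Real.exp (-(tEnergy (condOf G β) ε t + 1 / 2 * dirichlet (condOf G β) ε t s)) *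
        (lapOf (condOf G β) ε t).det := by
  rw [← sum_trees hβ, Finset.mul_sum, ← prod_gibbs hβ]
  refine Finset.sum_congr rfl fun T _ => ?_
  rw [dens]

lemma bres_nonneg (hβpos : ∀ i j, G.Adj i j → 0 < β i j) (hε : ∀ i, 0 ≤ ε i) {a b : Option V}
    (h : (aug G).Adj a b) : 0 ≤ bres β ε a b := by
  match a, b, h with
  | some i, some j, h => exact (hβpos i j ((aug_adj_some G i j).1 h)).le
  | some i, none, _ => exact hε i
  | none, some i, _ => exact hε i
  | none, none, _ => exact le_rfl

lemma esym_exp_nonneg {α : Type*} (f : α → α → ℝ) (e : Sym2 α) :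
    0 ≤ esym (fun a b => Real.exp (f a b)) e := by
  induction e using Sym2.ind with
  | _ a b =>
    rw [esym, Sym2.lift_mk]
    positivity

lemma dens_nonneg (hβ : ∀ i j, β i j = β j i) (hβpos : ∀ i j, G.Adj i j → 0 < β i j)
    (hε : ∀ i, 0 ≤ ε i) (t s : V → ℝ) {T : Finset (Sym2 (Option V))} (hT : T ∈ STrees (aug G)) :
    0 ≤ dens G β ε t s T := by
  rw [dens]
  refine mul_nonneg (mul_nonneg (Finset.prod_nonneg fun j _ => by positivity)
    (Finset.prod_nonneg fun e _ => esym_exp_nonneg _ e)) (Finset.prod_nonneg fun e he => ?_)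
  have hadj := (mem_STrees.1 hT).1 he
  induction e using Sym2.ind with
  | _ a b =>
    rw [treeW_mk hβ]
    exact mul_nonneg (bres_nonneg hβpos hε (by simpa using hadj)) (Real.exp_pos _).le

lemma continuous_dens (T : Finset (Sym2 (Option V))) :
    Continuous fun p : (V → ℝ) × (V → ℝ) => dens G β ε p.1 p.2 T := by
  have hx : ∀ a : Option V, Continuous fun p : (V → ℝ) × (V → ℝ) => extV p.1 a := by
    rintro (_ | i)
    · exact continuous_const
    · exact (continuous_apply i).comp continuous_fst
  have hy : ∀ a : Option V, Continuous fun p : (V → ℝ) × (V → ℝ) => extV p.2 a := by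
    rintro (_ | i)
    · exact continuous_const
    · exact (continuous_apply i).comp continuous_snd
  unfold dens
  refine (Continuous.mul (continuous_finsetProd _ fun j _ => by fun_prop)
    (continuous_finsetProd _ fun e _ => ?_)).mul (continuous_finsetProd _ fun e _ => ?_)
  · induction e using Sym2.ind with
    | _ a b =>
      simp only [gibbs, esym, Sym2.lift_mk, Bfun]
      have := hx a
      have := hx b
      have := hy a
      have := hy b
      fun_prop
  · induction e using Sym2.ind with
    | _ a b =>
      simp only [treeW, esym, Sym2.lift_mk]
      have := hx a
      have := hx b
      fun_prop

/-- The total mass: the Gaussian integral over `s` contributes `(2π)^{|V|/2} / √det M(t)`, which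
turns the tree determinant `det M(t)` into the density of the `t`-marginal. -/
lemma lintegral_sum_dens (hG : G.Connected) (hβ : ∀ i j, β i j = β j i)
    (hβpos : ∀ i j, G.Adj i j → 0 < β i j) (hε : ∀ i, 0 ≤ ε i) (hε' : ∃ i, 0 < ε i) :
    ∫⁻ p : (V → ℝ) × (V → ℝ),
      ENNReal.ofReal (∑ T ∈ STrees (aug G), dens G β ε p.1 p.2 T) = 1 := by
  have hW : ∀ i j, condOf G β i j = condOf G β j i := fun i j => by
    simp only [condOf, G.adj_comm i j, hβ i j]
  have hW0 : ∀ i j, 0 ≤ condOf G β i j := fun i j => by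
    rw [condOf]; split_ifs with h
    exacts [(hβpos i j h).le, le_rfl]
  have hW1 : ∀ i, condOf G β i i = 0 := fun i => by simp [condOf]
  have hWG : ∀ i j, G.Adj i j → 0 < condOf G β i j := fun i j h => by
    rw [condOf, if_pos h]; exact hβpos i j h
  have hmeas : Measurable fun p : (V → ℝ) × (V → ℝ) =>
      ENNReal.ofReal (∑ T ∈ STrees (aug G), dens G β ε p.1 p.2 T) :=
    (continuous_finsetSum _ fun T _ => continuous_dens T).measurable.ennreal_ofReal
  rw [Measure.volume_eq_prod, lintegral_prod _ hmeas.aemeasurable]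
  set c : ℝ := (√(2 * π) ^ Fintype.card V)⁻¹ with hc
  have h2π : 0 < √(2 * π) := by positivity
  have hc0 : 0 ≤ c := by positivity
  have hinner : ∀ t : V → ℝ, ∫⁻ s : V → ℝ,
      ENNReal.ofReal (∑ T ∈ STrees (aug G), dens G β ε t s T) =
      ENNReal.ofReal c * ENNReal.ofReal (√(schr (condOf G β) (fieldOf (condOf G β) ε t)).det *
        Real.exp (-tEnergy (condOf G β) ε t)) := by
    intro t
    have hp := schr_fieldOf_posDef hG hW hW0 hW1 hWG hε hε' t
    have hM := lapOf_posDef hW hW1 hp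
    set D := (schr (condOf G β) (fieldOf (condOf G β) ε t)).det with hD
    have hD0 : 0 < D := hp.det_pos
    set P := ∏ i, Real.exp (t i) with hP
    have hP0 : 0 < P := Finset.prod_pos fun i _ => Real.exp_pos _
    have hpre : ∏ j, Real.exp (-t j) / (2 * Real.pi) = P⁻¹ * c ^ 2 := by
      rw [Finset.prod_div_distrib, Finset.prod_const, Finset.card_univ, hc, hP,
        ← Finset.prod_inv_distrib, inv_pow, ← pow_mul, mul_comm _ 2, pow_mul,
        Real.sq_sqrt (by positivity), div_eq_mul_inv]
      simp only [Real.exp_neg]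
    have hdet : (lapOf (condOf G β) ε t).det = P ^ 2 * D := det_lapOf _ _ _
    have hfac : ∀ s, ENNReal.ofReal (∑ T ∈ STrees (aug G), dens G β ε t s T) =
        ENNReal.ofReal (P⁻¹ * c ^ 2 * Real.exp (-tEnergy (condOf G β) ε t) * (P ^ 2 * D)) *
          ENNReal.ofReal (Real.exp (-(1 / 2) * (s ⬝ᵥ (lapOf (condOf G β) ε t *ᵥ s)))) := by
      intro s
      rw [sum_dens hβ, lapOf_quadForm hW hW1, hpre, hdet, ← ENNReal.ofReal_mul (by positivity),
        neg_add, Real.exp_add, neg_mul]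
      congr 1
      ring
    simp only [hfac]
    rw [lintegral_const_mul' _ _ ENNReal.ofReal_ne_top, lintegral_gauss_posDef hM,
      ← ENNReal.ofReal_mul (by positivity), ← ENNReal.ofReal_mul hc0, hdet,
      Real.sqrt_mul (x := P ^ 2) (by positivity), Real.sqrt_sq hP0.le,
      show √(2 * π) ^ Fintype.card V = c⁻¹ by rw [hc, inv_inv]]
    congr 1
    have hD2 : √D * √D = D := Real.mul_self_sqrt hD0.le
    have hDs : 0 < √D := Real.sqrt_pos.2 hD0
    have hc1 : 0 < c := by positivity
    field_simp
    linear_combination -hD2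
  simp only [hinner]
  rw [lintegral_const_mul' _ _ ENNReal.ofReal_ne_top,
    lintegral_tMarginal hG hW hW0 hW1 hWG hε hε', ← ENNReal.ofReal_pow h2π.le,
    ← ENNReal.ofReal_mul hc0, hc, inv_mul_cancel₀ (by positivity), ENNReal.ofReal_one]

end Assembly

/-- `μ^ε` is a probability measure, i.e.
`Σ_{T∈𝒯} ∫_{ℝ^V×ℝ^V} Π_j (e^{−t_j}/(2π)) Π_{(i∼j)∈E_ρ} e^{−β_ij(B_ij(t,s)−1)}
  Π_{(i∼j)∈T} β_ij e^{t_i+t_j} dt ds = 1`. -/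
theorem stmt_5 {V : Type*} [Fintype V] [DecidableEq V]
    (G : SimpleGraph V) (hG : G.Connected)
    (β : V → V → ℝ) (hβsymm : ∀ i j, β i j = β j i)
    (hβpos : ∀ i j, G.Adj i j → 0 < β i j)
    (ε : V → ℝ) (hε : ∀ i, 0 ≤ ε i) (hε' : ∃ i, 0 < ε i) :
    ∑ T ∈ STrees (aug G),
      ∫ p : (V → ℝ) × (V → ℝ), dens G β ε p.1 p.2 T = 1 := by
  have hone := lintegral_sum_dens hG hβsymm hβpos hε hε'
  have hnn : ∀ T ∈ STrees (aug G), ∀ p : (V → ℝ) × (V → ℝ), 0 ≤ dens G β ε p.1 p.2 T :=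
    fun T hT p => dens_nonneg hβsymm hβpos hε p.1 p.2 hT
  have hsum : ∀ p : (V → ℝ) × (V → ℝ), 0 ≤ ∑ T ∈ STrees (aug G), dens G β ε p.1 p.2 T :=
    fun p => Finset.sum_nonneg fun T hT => hnn T hT p
  -- Each summand is dominated by the sum over all trees, which has finite integral.
  have hint : ∀ T ∈ STrees (aug G),
      Integrable fun p : (V → ℝ) × (V → ℝ) => dens G β ε p.1 p.2 T := by
    intro T hT
    refine ⟨(continuous_dens T).aestronglyMeasurable, ?_⟩
    rw [hasFiniteIntegral_iff_ofReal (.of_forall (hnn T hT))]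
    refine lt_of_le_of_lt (lintegral_mono fun p => ENNReal.ofReal_le_ofReal
      (Finset.single_le_sum (f := fun T => dens G β ε p.1 p.2 T)
        (fun T hT => hnn T hT p) hT)) (hone ▸ ENNReal.one_lt_top)
  rw [← integral_finsetSum _ hint, integral_eq_lintegral_of_nonneg_ae (.of_forall hsum)
    (continuous_finsetSum _ fun T _ => continuous_dens T).aestronglyMeasurable, hone,
    ENNReal.toReal_one]

end H22
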